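/- Let 𝒫 = (P, μ, σ) be an n-dimensional system. For every T > 0 there exists a unique u ∈ ℳ^{exp,1}(P) minimizing F_𝒫(T,·) on ℳ^{exp,1}(P) (and this u lies in ℳ^{exp,n/(n−1)}(P)). For T = 0 there exists a unique u ∈ ℳ^{exp,n/(n−1)}(P) such that u minimizes U_𝒫 on ℳ^{exp,1}(P) and S_𝒫(u) = sup{ S_𝒫(u') : u' ∈ ℳ^{exp,1}(P), U_𝒫(u') = inf_{ℳ^{exp,1}(P)} U_𝒫 }. -/

import Mathlib

open MeasureTheory Filter Topology
open scoped ENNReal NNReal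

noncomputable section

abbrev Euc (n : ℕ) := EuclideanSpace ℝ (Fin n)

/-- A `[0,∞]`-valued function on a set `K ⊆ ℝⁿ` is convex if
`u((1−t)x+ty) ≤ (1−t)u(x)+t·u(y)` in `[0,∞]` for all `x, y ∈ K` and `t ∈ [0,1]`. -/
def ConvexFnOn {n : ℕ} (K : Set (Euc n)) (u : Euc n → ℝ≥0∞) : Prop :=
  ∀ ⦃x⦄, x ∈ K → ∀ ⦃y⦄, y ∈ K → ∀ ⦃t : ℝ⦄, 0 ≤ t → t ≤ 1 →
    u ((1 - t) • x + t • y) ≤ ENNReal.ofReal (1 - t) * u x + ENNReal.ofReal t * u y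

/-- A polytope: a compact set with nonempty interior which is a finite
intersection of closed half-spaces (cut out by nonzero affine functions). -/
def IsPolytope {n : ℕ} (P : Set (Euc n)) : Prop :=
  IsCompact P ∧ (interior P).Nonempty ∧
    ∃ (m : ℕ) (L : Fin m → (Euc n →ᵃ[ℝ] ℝ)),
      (∀ k, L k ≠ 0) ∧ P = ⋂ k, {x | 0 ≤ L k x}

/-- `F` is a face of `P`: the intersection of `P` with the zero locus of a
nonzero affine function that is nonnegative on `P`. -/
def IsFaceOf {n : ℕ} (P F : Set (Euc n)) : Prop :=
  ∃ ℓ : Euc n →ᵃ[ℝ] ℝ, ℓ ≠ 0 ∧ (∀ y ∈ P, 0 ≤ ℓ y) ∧ F = {y ∈ P | ℓ y = 0}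

/-- A facet: a face spanning an affine subspace of dimension `n − 1`. -/
def IsFacetOf {n : ℕ} (P F : Set (Euc n)) : Prop :=
  IsFaceOf P F ∧ Module.finrank ℝ (vectorSpan ℝ F) + 1 = n

/-- A simple polytope: every vertex lies on exactly `n` facets. -/
def IsSimplePolytope {n : ℕ} (P : Set (Euc n)) : Prop :=
  IsPolytope P ∧ ∀ v : Euc n, IsFaceOf P {v} →
    {F : Set (Euc n) | IsFacetOf P F ∧ v ∈ F}.ncard = n

/-- An `n`-dimensional system `𝒫 = (P, μ, σ)`: a simple polytope `P ⊆ ℝⁿ`, a flat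
measure `μ` on `P` (a positive constant multiple of Lebesgue measure restricted
to `P`), and a flat measure `σ` on `∂P` (supported on the boundary and, on each
facet, a positive constant multiple of `(n−1)`-dimensional Hausdorff measure). -/
structure NSystem (n : ℕ) where
  P : Set (Euc n)
  μ : Measure (Euc n)
  σ : Measure (Euc n)
  simple : IsSimplePolytope P
  flat : ∃ c : ℝ, 0 < c ∧ μ = ENNReal.ofReal c • volume.restrict P
  bdry_supp : σ (frontier P)ᶜ = 0
  flat_bdry : ∀ F : Set (Euc n), IsFacetOf P F →
    ∃ c : ℝ, 0 < c ∧ σ.restrict F =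
      ENNReal.ofReal c • (Measure.hausdorffMeasure ((n : ℝ) - 1)).restrict F

/-- `y log y`, computed via the real value of `y ∈ [0,∞]`. -/
def xlogx (y : ℝ≥0∞) : ℝ := y.toReal * Real.log y.toReal

/-- `∫_A u log u dμ ∈ (−∞, ∞]`, as an extended real number. -/
def entOn {n : ℕ} (μ : Measure (Euc n)) (A : Set (Euc n)) (u : Euc n → ℝ≥0∞) : EReal :=
  ((∫⁻ x in A, ENNReal.ofReal (xlogx (u x)) ∂μ : ℝ≥0∞) : EReal)
    - ((∫⁻ x in A, ENNReal.ofReal (-(xlogx (u x))) ∂μ : ℝ≥0∞) : EReal)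

/-- `u : P → (0,∞]` is log-convex: `u((1−t)x+ty) ≤ u(x)^{1−t} u(y)^t`. -/
def LogConvexOn {n : ℕ} (P : Set (Euc n)) (u : Euc n → ℝ≥0∞) : Prop :=
  ∀ ⦃x⦄, x ∈ P → ∀ ⦃y⦄, y ∈ P → ∀ ⦃t : ℝ⦄, 0 ≤ t → t ≤ 1 →
    u ((1 - t) • x + t • y) ≤ u x ^ (1 - t) * u y ^ t

/-- `ℳ^{exp,p}(P)`: lower semi-continuous log-convex `u : P → (0,∞]` with
`∫_P u dμ = μ(P)` and `∫_P u^p dμ < ∞`. -/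
def MExp {n : ℕ} (S : NSystem n) (p : ℝ) : Set (Euc n → ℝ≥0∞) :=
  {u | LowerSemicontinuousOn u S.P ∧ (∀ x ∈ S.P, 0 < u x) ∧ LogConvexOn S.P u ∧
    (∫⁻ x in S.P, u x ∂S.μ) = S.μ S.P ∧ (∫⁻ x in S.P, u x ^ p ∂S.μ) < ⊤}

/-- The nonequilibrium entropy `S_𝒫(u) = −(1/μ(P)) ∫_P u log u dμ ∈ [−∞, 0]`. -/
def Spf {n : ℕ} (S : NSystem n) (u : Euc n → ℝ≥0∞) : EReal :=
  (((S.μ S.P).toReal⁻¹ : ℝ) : EReal) *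
    (((∫⁻ x in S.P, ENNReal.ofReal (-(xlogx (u x))) ∂S.μ : ℝ≥0∞) : EReal)
      - ((∫⁻ x in S.P, ENNReal.ofReal (xlogx (u x)) ∂S.μ : ℝ≥0∞) : EReal))

/-- The internal μ-energy `U_𝒫(u) = (1/μ(P)) ∫_{∂P} u dσ ∈ (0, ∞]`. -/
def Upf {n : ℕ} (S : NSystem n) (u : Euc n → ℝ≥0∞) : ℝ≥0∞ :=
  (S.μ S.P)⁻¹ * ∫⁻ x in frontier S.P, u x ∂S.σ

/-- The free μ-energy `F_𝒫(T,u) = U_𝒫(u) − T·S_𝒫(u)` if `S_𝒫(u) > −∞`, else `∞`. -/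
def Fpf {n : ℕ} (S : NSystem n) (T : ℝ) (u : Euc n → ℝ≥0∞) : EReal :=
  if Spf S u = ⊥ then ⊤ else (Upf S u : EReal) - (T : EReal) * Spf S u

/-- `u` is the μ-canonical distribution of temperature `T ≥ 0`: for `T > 0` the
minimizer of `F_𝒫(T,·)` on `ℳ^{exp,1}(P)`; for `T = 0` the minimizer of `U_𝒫`
maximizing `S_𝒫` among all minimizers of `U_𝒫`. -/
def IsCanonical {n : ℕ} (S : NSystem n) (T : ℝ) (u : Euc n → ℝ≥0∞) : Prop :=
  u ∈ MExp S 1 ∧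
  (0 < T → ∀ u' ∈ MExp S 1, Fpf S T u ≤ Fpf S T u') ∧
  (T = 0 → (∀ u' ∈ MExp S 1, Upf S u ≤ Upf S u') ∧
    ∀ u' ∈ MExp S 1, (∀ u'' ∈ MExp S 1, Upf S u' ≤ Upf S u'') → Spf S u' ≤ Spf S u)


/-! Up to constants the free energy is `∫ u dτ + t H(u)`, where `τ` is a measure on the boundary
and `H(u) = ∫ (u log u + 1 - u) dν` a relative entropy. The gap in the convexity inequality of `H`
at the midpoint of `u` and `v` is at least a quarter of their squared Hellinger distance.
Densities of nearly least entropy among those of nearly least free energy are therefore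
Hellinger-Cauchy, also for `t = 0`, and a sequence of them has a subsequence converging almost
everywhere; the same inequality gives uniqueness.

Log-convex functions converging almost everywhere converge at every interior point of `P`.
Extending the limit radially to the boundary gives a lower semicontinuous log-convex function
below the pointwise liminf, so by Fatou's lemma it is a minimizer.

A log-convex function is bounded along a chord by its values at the endpoints, and the facets
containing these are not parallel to the chord. The Gagliardo-Nirenberg inequality thus bounds
`∫ u ^ (n / (n - 1))` by a power of the boundary integral of `u`, so finite internal energy
implies finite entropy. -/

namespace LogConvexOn

variable {n : ℕ} {P Q : Set (Euc n)} {u v : Euc n → ℝ≥0∞} {x y z q : Euc n}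

theorem mono (hu : LogConvexOn Q u) (hPQ : P ⊆ Q) : LogConvexOn P u :=
  fun _ hx _ hy _ ht₀ ht₁ => hu (hPQ hx) (hPQ hy) ht₀ ht₁

theorem comp_lineMap (hP : Convex ℝ P) (hu : LogConvexOn (interior P) u) (hq : q ∈ interior P)
    {s : ℝ} (hs : s ∈ Set.Ioo (0 : ℝ) 1) :
    LogConvexOn P fun x => u ((1 - s) • x + s • q) := by
  intro x hx y hy t ht₀ ht₁
  have hmem : ∀ z ∈ P, (1 - s) • z + s • q ∈ interior P := fun z hz =>
    hP.combo_self_interior_mem_interior hz hq (by linarith [hs.2]) hs.1 (by ring)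
  have hcombo : (1 - s) • ((1 - t) • x + t • y) + s • q =
      (1 - t) • ((1 - s) • x + s • q) + t • ((1 - s) • y + s • q) := by module
  simpa only [hcombo] using hu (hmem x hx) (hmem y hy) ht₀ ht₁

theorem const_mul (hu : LogConvexOn P u) (c : ℝ≥0∞) : LogConvexOn P fun x => c * u x := by
  intro x hx y hy t ht₀ ht₁
  have ht₁' : 0 ≤ 1 - t := sub_nonneg.2 ht₁
  calc c * u ((1 - t) • x + t • y)
      ≤ c ^ ((1 - t) + t) * (u x ^ (1 - t) * u y ^ t) := by
        rw [sub_add_cancel, ENNReal.rpow_one]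
        gcongr
        exact hu hx hy ht₀ ht₁
    _ = (c * u x) ^ (1 - t) * (c * u y) ^ t := by
        rw [ENNReal.rpow_add_of_nonneg _ _ ht₁' ht₀, ENNReal.mul_rpow_of_nonneg _ _ ht₁',
          ENNReal.mul_rpow_of_nonneg _ _ ht₀]
        ring

theorem rpow (hu : LogConvexOn P u) {r : ℝ} (hr : 0 ≤ r) : LogConvexOn P fun x => u x ^ r := by
  intro x hx y hy t ht₀ ht₁
  calc u ((1 - t) • x + t • y) ^ r
      ≤ (u x ^ (1 - t) * u y ^ t) ^ r := by gcongr; exact hu hx hy ht₀ ht₁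
    _ = (u x ^ r) ^ (1 - t) * (u y ^ r) ^ t := by
        rw [ENNReal.mul_rpow_of_nonneg _ _ hr]
        simp only [← ENNReal.rpow_mul, mul_comm r]

theorem iSup {ι : Sort*} {u : ι → Euc n → ℝ≥0∞} (hu : ∀ i, LogConvexOn P (u i)) :
    LogConvexOn P fun x => ⨆ i, u i x := by
  intro x hx y hy t ht₀ ht₁
  have : 0 ≤ 1 - t := sub_nonneg.2 ht₁
  refine iSup_le fun i => (hu i hx hy ht₀ ht₁).trans ?_
  gcongr <;> exact le_iSup (fun i => u i _) i

theorem add (hu : LogConvexOn P u) (hv : LogConvexOn P v) :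
    LogConvexOn P fun x => u x + v x := by
  intro x hx y hy t ht₀ ht₁
  refine (add_le_add (hu hx hy ht₀ ht₁) (hv hx hy ht₀ ht₁)).trans ?_
  rcases ht₀.eq_or_lt with rfl | ht₀
  · simp
  rcases ht₁.eq_or_lt with rfl | ht₁
  · simp
  have ht₁' : 0 < 1 - t := sub_pos.2 ht₁
  have hpq : Real.HolderConjugate (1 - t)⁻¹ t⁻¹ :=
    Real.holderConjugate_iff.2 ⟨(one_lt_inv₀ ht₁').2 (by linarith), by simp⟩
  have holder := ENNReal.inner_le_Lp_mul_Lq Finset.univ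
    ![u x ^ (1 - t), v x ^ (1 - t)] ![u y ^ t, v y ^ t] hpq
  simpa [Fin.sum_univ_two, ← ENNReal.rpow_mul, ht₁'.ne', ht₀.ne'] using holder

theorem le_of_le_of_le (hu : LogConvexOn P u) (hx : x ∈ P) (hy : y ∈ P) {c : ℝ≥0∞}
    (hxc : u x ≤ c) (hyc : u y ≤ c) {t : ℝ} (ht₀ : 0 ≤ t) (ht₁ : t ≤ 1) :
    u ((1 - t) • x + t • y) ≤ c := by
  have ht₁' : 0 ≤ 1 - t := sub_nonneg.2 ht₁
  calc u ((1 - t) • x + t • y) ≤ u x ^ (1 - t) * u y ^ t := hu hx hy ht₀ ht₁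
    _ ≤ c ^ (1 - t) * c ^ t := by gcongr
    _ = c := by rw [← ENNReal.rpow_add_of_nonneg _ _ ht₁' ht₀, sub_add_cancel, ENNReal.rpow_one]

theorem convexOn_toReal (hP : Convex ℝ P) (hu : LogConvexOn P u) (hfin : ∀ x ∈ P, u x ≠ ⊤) :
    ConvexOn ℝ P fun x => (u x).toReal := by
  refine ⟨hP, fun x hx y hy a b ha hb hab => ?_⟩
  obtain rfl : a = 1 - b := by linarith
  calc (u ((1 - b) • x + b • y)).toReal
      ≤ (u x ^ (1 - b) * u y ^ b).toReal := ENNReal.toReal_mono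
        (ENNReal.mul_ne_top (ENNReal.rpow_ne_top_of_nonneg ha (hfin x hx))
          (ENNReal.rpow_ne_top_of_nonneg hb (hfin y hy))) (hu hx hy hb (by linarith))
    _ = (u x).toReal ^ (1 - b) * (u y).toReal ^ b := by
        rw [ENNReal.toReal_mul, ENNReal.toReal_rpow, ENNReal.toReal_rpow]
    _ ≤ (1 - b) • (u x).toReal + b • (u y).toReal :=
        Real.geom_mean_le_arith_mean2_weighted ha hb ENNReal.toReal_nonneg
          ENNReal.toReal_nonneg hab

theorem continuousOn (hPo : IsOpen P) (hP : Convex ℝ P) (hu : LogConvexOn P u)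
    (hfin : ∀ x ∈ P, u x ≠ ⊤) : ContinuousOn u P :=
  (ENNReal.continuous_ofReal.comp_continuousOn
    ((hu.convexOn_toReal hP hfin).continuousOn hPo)).congr
      fun x hx => (ENNReal.ofReal_toReal (hfin x hx)).symm

end LogConvexOn

theorem exists_eq_combo_of_mem_open {E : Type*} [NormedAddCommGroup E] [NormedSpace ℝ E] {P : Set E}
    (hP : IsOpen P) {x : E} (hx : x ∈ P) (z : E) :
    ∃ y ∈ P, ∃ t ∈ Set.Ioo (0 : ℝ) 1, x = (1 - t) • z + t • y := by
  have hlim : Tendsto (fun s : ℝ => x + s • (x - z)) (𝓝[>] 0) (𝓝 x) := by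
    have : Continuous fun s : ℝ => x + s • (x - z) := by fun_prop
    simpa using (this.tendsto 0).mono_left nhdsWithin_le_nhds
  obtain ⟨s, hsP, hs : 0 < s⟩ :=
    ((hlim.eventually (hP.mem_nhds hx)).and self_mem_nhdsWithin).exists
  refine ⟨_, hsP, (1 + s)⁻¹, ⟨by positivity, inv_lt_one_of_one_lt₀ (by linarith)⟩, ?_⟩
  match_scalars <;> field_simp
  ring

theorem LogConvexOn.eqOn_zero {n : ℕ} {P : Set (Euc n)} {u : Euc n → ℝ≥0∞} {z : Euc n}
    (hP : IsOpen P) (hu : LogConvexOn P u) (hz : z ∈ P) (huz : u z = 0) : Set.EqOn u 0 P := by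
  intro x hx
  obtain ⟨y, hy, t, ⟨ht₀, ht₁⟩, rfl⟩ := exists_eq_combo_of_mem_open hP hx z
  simpa [huz, sub_pos.2 ht₁] using hu hz hy ht₀.le ht₁.le

theorem exists_symmetric_pair_of_ae {G : Type*} [AddCommGroup G] [TopologicalSpace G]
    [IsTopologicalAddGroup G] [MeasurableSpace G] [BorelSpace G] {ν : Measure G}
    [ν.IsAddLeftInvariant] [ν.IsNegInvariant] [ν.IsOpenPosMeasure] {P : Set G} (hP : IsOpen P)
    {x : G} (hx : x ∈ P) {p : G → Prop} (hp : ∀ᵐ y ∂ν.restrict P, p y) :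
    ∃ y ∈ P, x + x - y ∈ P ∧ p y ∧ p (x + x - y) := by
  rw [ae_restrict_iff' hP.measurableSet] at hp
  have hrefl := (Measure.measurePreserving_sub_left ν (x + x)).quasiMeasurePreserving.ae hp
  have hcont : ContinuousAt (fun y => x + x - y) x := by fun_prop
  have hnhds : ∀ᶠ y in 𝓝 x, y ∈ P ∧ x + x - y ∈ P :=
    (hP.eventually_mem hx).and (hcont.eventually (hP.eventually_mem (by simpa using hx)))
  obtain ⟨U, hU, hUo, hxU⟩ := eventually_nhds_iff.1 hnhds
  obtain ⟨y, hyU, hy⟩ := ((frequently_ae_mem_iff.2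
    (hUo.measure_pos ν ⟨x, hxU⟩).ne').and_eventually (hp.and hrefl)).exists
  exact ⟨y, (hU y hyU).1, (hU y hyU).2, hy.1 (hU y hyU).1, hy.2 (hU y hyU).2⟩

theorem tendsto_const_ennrpow {α : Type*} {l : Filter α} {f : α → ℝ} {r : ℝ} {c : ℝ≥0∞}
    (hc₀ : c ≠ 0) (hc_top : c ≠ ⊤) (hf : Tendsto f l (𝓝 r)) :
    Tendsto (fun a => c ^ f a) l (𝓝 (c ^ r)) := by
  lift c to ℝ≥0 using hc_top
  have hc₀' : c ≠ 0 := by simpa using hc₀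
  simp only [← ENNReal.coe_rpow_of_ne_zero hc₀']
  exact ENNReal.tendsto_coe.2 (tendsto_const_nhds.nnrpow hf (.inl hc₀'))

section RadialEnvelope

variable {n : ℕ} {P : Set (Euc n)} {u : Euc n → ℝ≥0∞} {x q : Euc n} {s : ℝ}

/-- The lower bound on `u x` that log-convexity of `u` along the segment from `x` to `q` extracts
from the value of `u` at the point at proportion `s` of the segment and the value at `q`. -/
def radialBound (q : Euc n) (s : ℝ) (u : Euc n → ℝ≥0∞) (x : Euc n) : ℝ≥0∞ :=
  ((u q ^ s)⁻¹ * u ((1 - s) • x + s • q)) ^ (1 - s)⁻¹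

/-- The supremum of the bounds `radialBound q s u`; it only sees `u` in the interior of a convex
set containing `x` when `q` is an interior point, and is the lower semicontinuous extension of `u`
from the interior. -/
def radialEnvelope (q : Euc n) (u : Euc n → ℝ≥0∞) (x : Euc n) : ℝ≥0∞ :=
  ⨆ s : Set.Ioo (0 : ℝ) 1, radialBound q s u x

theorem radialBound_le (hu : LogConvexOn P u) (hx : x ∈ P) (hq : q ∈ P)
    (hs : s ∈ Set.Ioo (0 : ℝ) 1) : radialBound q s u x ≤ u x := by
  rw [radialBound, ENNReal.rpow_inv_le_iff (sub_pos.2 hs.2), mul_comm, ← div_eq_mul_inv]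
  exact ENNReal.div_le_of_le_mul (hu hx hq hs.1.le hs.2.le)

theorem tendsto_radialBound {ι : Type*} {l : Filter ι} {w : ι → Euc n → ℝ≥0∞}
    (hq : Tendsto (fun k => w k q) l (𝓝 (u q))) (hq₀ : u q ≠ 0) (hq_top : u q ≠ ⊤)
    (hx : Tendsto (fun k => w k ((1 - s) • x + s • q)) l (𝓝 (u ((1 - s) • x + s • q))))
    (hx_top : u ((1 - s) • x + s • q) ≠ ⊤) :
    Tendsto (fun k => radialBound q s (w k) x) l (𝓝 (radialBound q s u x)) := by
  have hinv_top : (u q ^ s)⁻¹ ≠ ⊤ := ENNReal.inv_ne_top.2 (by simp [hq₀, hq_top])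
  exact (ENNReal.Tendsto.mul (tendsto_inv_iff.2 (hq.ennrpow_const s)) (.inr hx_top) hx
    (.inr hinv_top)).ennrpow_const _

theorem lowerSemicontinuousOn_radialEnvelope (hP : Convex ℝ P) (hu : ContinuousOn u (interior P))
    (hq : q ∈ interior P) (hq₀ : u q ≠ 0) (hq_top : u q ≠ ⊤) :
    LowerSemicontinuousOn (radialEnvelope q u) P := by
  refine lowerSemicontinuousOn_iSup fun s => ContinuousOn.lowerSemicontinuousOn ?_
  have hmaps : Set.MapsTo (fun x => (1 - (s : ℝ)) • x + (s : ℝ) • q) P (interior P) := fun x hx =>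
    hP.combo_self_interior_mem_interior hx hq (by linarith [s.2.2]) s.2.1 (by ring)
  refine ENNReal.continuous_rpow_const.comp_continuousOn
    ((ENNReal.continuous_const_mul ?_).comp_continuousOn (hu.comp (by fun_prop) hmaps))
  exact ENNReal.inv_ne_top.2 (by simp [hq₀, hq_top])

theorem LogConvexOn.radialEnvelope (hP : Convex ℝ P) (hu : LogConvexOn (interior P) u)
    (hq : q ∈ interior P) : LogConvexOn P (radialEnvelope q u) :=
  LogConvexOn.iSup fun s =>
    ((hu.comp_lineMap hP hq s.2).const_mul _).rpow (by simpa using s.2.2.le)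

theorem radialEnvelope_pos (hP : Convex ℝ P) (hq : q ∈ interior P) (hq_top : u q ≠ ⊤)
    (hu₀ : ∀ x ∈ interior P, u x ≠ 0) (hx : x ∈ P) : 0 < radialEnvelope q u x := by
  have hhalf : (1 / 2 : ℝ) ∈ Set.Ioo (0 : ℝ) 1 := by norm_num
  refine lt_of_lt_of_le ?_ (le_iSup (fun s : Set.Ioo (0 : ℝ) 1 => radialBound q s u x) ⟨_, hhalf⟩)
  refine ENNReal.rpow_pos_of_nonneg (ENNReal.mul_pos ?_ (hu₀ _ ?_)) (by norm_num)
  · simp [hq_top]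
  · exact hP.combo_self_interior_mem_interior hx hq (by norm_num) (by norm_num) (by norm_num)

theorem eqOn_radialEnvelope (hP : Convex ℝ P) (hu : LogConvexOn P u)
    (hlsc : LowerSemicontinuousOn u P) (hu₀ : ∀ x ∈ interior P, u x ≠ 0) (hq : q ∈ interior P)
    (hq_top : u q ≠ ⊤) : Set.EqOn (radialEnvelope q u) u P := by
  intro x hx
  set R := radialEnvelope q u x
  have hRu : R ≤ u x := iSup_le fun s => radialBound_le hu hx (interior_subset hq) s.2
  refine hRu.antisymm (le_of_forall_lt_imp_le_of_dense fun c hc => ?_)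
  rcases eq_or_ne R ⊤ with hR_top | hR_top
  · simp [hR_top]
  have hR₀ : R ≠ 0 := (radialEnvelope_pos hP hq hq_top hu₀ hx).ne'
  have hid : Tendsto (fun s : ℝ => s) (𝓝[>] 0) (𝓝 0) := tendsto_id.mono_left nhdsWithin_le_nhds
  have hlim : Tendsto (fun s : ℝ => u q ^ s * R ^ (1 - s)) (𝓝[>] 0) (𝓝 R) := by
    simpa using ENNReal.Tendsto.mul (tendsto_const_ennrpow (hu₀ q hq) hq_top hid) (by simp)
      (tendsto_const_ennrpow hR₀ hR_top (hid.const_sub 1)) (by simp)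
  refine ge_of_tendsto hlim ?_
  have hseg : Tendsto (fun s : ℝ => (1 - s) • x + s • q) (𝓝[>] 0) (𝓝[P] x) := by
    refine tendsto_nhdsWithin_iff.2 ⟨?_, ?_⟩
    · have hcont : Continuous fun s : ℝ => (1 - s) • x + s • q := by fun_prop
      simpa using (hcont.tendsto 0).mono_left nhdsWithin_le_nhds
    · filter_upwards [Ioo_mem_nhdsGT one_pos] with s hs
      exact hP hx (interior_subset hq) (sub_nonneg.2 hs.2.le) hs.1.le (sub_add_cancel _ _)
  filter_upwards [hseg.eventually (hlsc x hx c hc), Ioo_mem_nhdsGT one_pos] with s hcs hs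
  have hle : radialBound q s u x ≤ R :=
    le_iSup (fun s : Set.Ioo (0 : ℝ) 1 => radialBound q s u x) ⟨s, hs⟩
  rw [radialBound, ENNReal.rpow_inv_le_iff (sub_pos.2 hs.2), ENNReal.inv_mul_le_iff
    (ENNReal.rpow_pos (hu₀ q hq).bot_lt hq_top).ne'
    (ENNReal.rpow_ne_top_of_nonneg hs.1.le hq_top)] at hle
  exact hcs.le.trans hle

theorem radialEnvelope_le_liminf {w : ℕ → Euc n → ℝ≥0∞} (hP : Convex ℝ P)
    (hw : ∀ k, LogConvexOn P (w k)) (hq : q ∈ interior P) (hq₀ : u q ≠ 0)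
    (hu_top : ∀ x ∈ interior P, u x ≠ ⊤)
    (hwu : ∀ x ∈ interior P, Tendsto (fun k => w k x) atTop (𝓝 (u x))) (hx : x ∈ P) :
    radialEnvelope q u x ≤ liminf (fun k => w k x) atTop := by
  refine iSup_le fun s => ?_
  have hxs := hP.combo_self_interior_mem_interior hx hq (sub_nonneg.2 s.2.2.le) s.2.1
    (sub_add_cancel _ _)
  rw [← (tendsto_radialBound (hwu q hq) hq₀ (hu_top q hq) (hwu _ hxs) (hu_top _ hxs)).liminf_eq]
  exact liminf_le_liminf (.of_forall fun k =>
    radialBound_le (hw k) hx (interior_subset hq) s.2)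

end RadialEnvelope

section Limits

variable {n : ℕ} {P : Set (Euc n)} {u f : Euc n → ℝ≥0∞} {w : ℕ → Euc n → ℝ≥0∞} {x : Euc n}

theorem limsup_rpow {ι : Type*} {l : Filter ι} [l.NeBot] (a : ι → ℝ≥0∞) {r : ℝ} (hr : 0 ≤ r) :
    limsup (fun k => a k ^ r) l = limsup a l ^ r :=
  ((ENNReal.monotone_rpow_of_nonneg hr).map_limsup_of_continuousAt a
    ENNReal.continuous_rpow_const.continuousAt).symm

theorem LogConvexOn.limsup_combo_le (hw : ∀ k, LogConvexOn P (w k)) {y : Euc n} (hx : x ∈ P)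
    (hy : y ∈ P) (hx_top : limsup (fun k => w k x) atTop ≠ ⊤)
    (hy_top : limsup (fun k => w k y) atTop ≠ ⊤) {t : ℝ} (ht₀ : 0 ≤ t) (ht₁ : t ≤ 1) :
    limsup (fun k => w k ((1 - t) • x + t • y)) atTop ≤
      limsup (fun k => w k x) atTop ^ (1 - t) * limsup (fun k => w k y) atTop ^ t := by
  have ht₁' : 0 ≤ 1 - t := sub_nonneg.2 ht₁
  rw [← limsup_rpow _ ht₁', ← limsup_rpow _ ht₀]
  refine (limsup_le_limsup (.of_forall fun k => hw k hx hy ht₀ ht₁)).trans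
    (ENNReal.limsup_mul_le' (.inr ?_) (.inl ?_))
  · simpa only [limsup_rpow _ ht₀] using ENNReal.rpow_ne_top_of_nonneg ht₀ hy_top
  · simpa only [limsup_rpow _ ht₁'] using ENNReal.rpow_ne_top_of_nonneg ht₁' hx_top

theorem LogConvexOn.limsup_ne_top (hP : IsOpen P) (hw : ∀ k, LogConvexOn P (w k))
    (hfin : ∀ᵐ y ∂volume.restrict P, limsup (fun k => w k y) atTop ≠ ⊤) (hx : x ∈ P) :
    limsup (fun k => w k x) atTop ≠ ⊤ := by
  obtain ⟨y, hy, hy', hfy, hfy'⟩ := exists_symmetric_pair_of_ae hP hx hfin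
  have hmid : (1 - 1 / 2 : ℝ) • y + (1 / 2 : ℝ) • (x + x - y) = x := by module
  have hle := LogConvexOn.limsup_combo_le hw hy hy' hfy hfy' (t := 1 / 2) (by norm_num)
    (by norm_num)
  rw [hmid] at hle
  exact ne_top_of_le_ne_top (ENNReal.mul_ne_top
    (ENNReal.rpow_ne_top_of_nonneg (by norm_num) hfy)
    (ENNReal.rpow_ne_top_of_nonneg (by norm_num) hfy')) hle

theorem LogConvexOn.ne_top (hP : IsOpen P) (hu : LogConvexOn P u)
    (hfin : ∀ᵐ y ∂volume.restrict P, u y ≠ ⊤) (hx : x ∈ P) : u x ≠ ⊤ := by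
  simpa using limsup_ne_top hP (fun _ : ℕ => hu) (by simpa using hfin) hx

/-- `limsup` is taken so that log-convexity passes to the limit everywhere, not only where the
sequence converges. -/
theorem LogConvexOn.limsup (hP : IsOpen P) (hw : ∀ k, LogConvexOn P (w k))
    (hfin : ∀ᵐ y ∂volume.restrict P, limsup (fun k => w k y) atTop ≠ ⊤) :
    LogConvexOn P fun x => limsup (fun k => w k x) atTop :=
  fun _ hx _ hy _ ht₀ ht₁ =>
    limsup_combo_le hw hx hy (limsup_ne_top hP hw hfin hx) (limsup_ne_top hP hw hfin hy) ht₀ ht₁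

theorem LogConvexOn.eqOn_limsup_of_ae_tendsto (hPo : IsOpen P) (hP : Convex ℝ P)
    (hw : ∀ k, LogConvexOn P (w k)) (hf : ∀ᵐ y ∂volume.restrict P, f y ≠ ⊤)
    (hlim : ∀ᵐ y ∂volume.restrict P, Tendsto (fun k => w k y) atTop (𝓝 (f y)))
    (hu : ContinuousOn u P) (huf : u =ᵐ[volume.restrict P] f) :
    Set.EqOn (fun x => Filter.limsup (fun k => w k x) atTop) u P := by
  have hae : (fun x => Filter.limsup (fun k => w k x) atTop) =ᵐ[volume.restrict P] f :=
    hlim.mono fun y hy => hy.limsup_eq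
  have hfin : ∀ᵐ y ∂volume.restrict P, Filter.limsup (fun k => w k y) atTop ≠ ⊤ := by
    filter_upwards [hae, hf] with y hy hfy
    rwa [hy]
  exact Measure.eqOn_open_of_ae_eq (hae.trans huf.symm) hPo
    ((limsup hPo hw hfin).continuousOn hPo hP fun x hx => limsup_ne_top hPo hw hfin hx) hu

theorem LogConvexOn.tendsto_of_ae_tendsto (hPo : IsOpen P) (hP : Convex ℝ P)
    (hw : ∀ k, LogConvexOn P (w k)) (hf : ∀ᵐ y ∂volume.restrict P, f y ≠ ⊤)
    (hlim : ∀ᵐ y ∂volume.restrict P, Tendsto (fun k => w k y) atTop (𝓝 (f y)))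
    (hu : ContinuousOn u P) (huf : u =ᵐ[volume.restrict P] f) (hx : x ∈ P) :
    Tendsto (fun k => w k x) atTop (𝓝 (u x)) := by
  have hsup := eqOn_limsup_of_ae_tendsto hPo hP hw hf hlim hu huf hx
  refine tendsto_order.2 ⟨fun c hc => ?_, fun c hc => eventually_lt_of_limsup_lt (hsup.trans_lt hc)⟩
  -- Along a subsequence staying below `c`, the limsup would be a continuous version of `f` too.
  by_contra hfreq
  obtain ⟨φ, hφ, hφc⟩ := extraction_of_frequently_atTop (not_eventually.1 hfreq)
  have hsub := eqOn_limsup_of_ae_tendsto hPo hP (fun k => hw (φ k)) hf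
    (hlim.mono fun y hy => hy.comp hφ.tendsto_atTop) hu huf hx
  exact hc.not_ge (hsub.symm.trans_le
    (limsup_le_of_le (h := .of_forall fun k => not_lt.1 (hφc k))))

theorem exists_logConvexOn_of_ae_tendsto (hP : Convex ℝ P) (hw : ∀ k, LogConvexOn P (w k))
    (hlim : ∀ᵐ y ∂volume.restrict P, Tendsto (fun k => w k y) atTop (𝓝 (f y)))
    (hf : ∀ᵐ y ∂volume.restrict P, f y ≠ ⊤) (hf₀ : ¬f =ᵐ[volume.restrict P] 0) :
    ∃ u, LowerSemicontinuousOn u P ∧ (∀ x ∈ P, 0 < u x) ∧ LogConvexOn P u ∧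
      u =ᵐ[volume.restrict P] f ∧ ∀ x ∈ P, u x ≤ liminf (fun k => w k x) atTop := by
  have hint : volume.restrict P = volume.restrict (interior P) :=
    (Measure.restrict_congr_set (interior_ae_eq_of_null_frontier (hP.addHaar_frontier _))).symm
  rw [hint] at hlim hf hf₀ ⊢
  have hwi : ∀ k, LogConvexOn (interior P) (w k) := fun k => (hw k).mono interior_subset
  set g : Euc n → ℝ≥0∞ := fun x => limsup (fun k => w k x) atTop with hg
  have hgf : g =ᵐ[volume.restrict (interior P)] f := hlim.mono fun y hy => hy.limsup_eq
  have hg_ae : ∀ᵐ y ∂volume.restrict (interior P), g y ≠ ⊤ := by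
    filter_upwards [hgf, hf] with y hy hfy
    rwa [hy]
  have hg_top : ∀ x ∈ interior P, g x ≠ ⊤ := fun x hx =>
    LogConvexOn.limsup_ne_top isOpen_interior hwi hg_ae hx
  have hg_lc : LogConvexOn (interior P) g := LogConvexOn.limsup isOpen_interior hwi hg_ae
  have hg_cont := hg_lc.continuousOn isOpen_interior hP.interior hg_top
  have hg₀ : ∀ x ∈ interior P, g x ≠ 0 := fun x hx hgx =>
    hf₀ (hgf.symm.trans (ae_restrict_of_forall_mem isOpen_interior.measurableSet
      (hg_lc.eqOn_zero isOpen_interior hx hgx)))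
  obtain ⟨q, hq⟩ : (interior P).Nonempty := by
    by_contra hempty
    rw [Set.not_nonempty_iff_eq_empty.1 hempty, Measure.restrict_empty] at hf₀
    exact hf₀ rfl
  have hext : Set.EqOn (radialEnvelope q g) g (interior P) := eqOn_radialEnvelope hP.interior hg_lc
    hg_cont.lowerSemicontinuousOn (by simpa using hg₀) (by simpa using hq) (hg_top q hq)
  have hext_ae : radialEnvelope q g =ᵐ[volume.restrict (interior P)] g :=
    ae_restrict_of_forall_mem isOpen_interior.measurableSet hext
  exact ⟨radialEnvelope q g,
    lowerSemicontinuousOn_radialEnvelope hP hg_cont hq (hg₀ q hq) (hg_top q hq),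
    fun x hx => radialEnvelope_pos hP hq (hg_top q hq) hg₀ hx, hg_lc.radialEnvelope hP hq,
    hext_ae.trans hgf,
    fun x hx => radialEnvelope_le_liminf hP hw hq (hg₀ q hq) hg_top
      (fun y hy => LogConvexOn.tendsto_of_ae_tendsto isOpen_interior hP.interior hwi hf hlim
        hg_cont hgf hy) hx⟩

theorem LogConvexOn.eqOn_of_ae_eq (hP : Convex ℝ P) (hne : (interior P).Nonempty)
    (hu : LogConvexOn P u) (hv : LogConvexOn P v) (hu_lsc : LowerSemicontinuousOn u P)
    (hv_lsc : LowerSemicontinuousOn v P) (hu₀ : ∀ x ∈ P, 0 < u x)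
    (hfin : ∀ᵐ x ∂volume.restrict P, u x ≠ ⊤) (huv : u =ᵐ[volume.restrict P] v) :
    Set.EqOn u v P := by
  have hu_ae := ae_restrict_of_ae_restrict_of_subset interior_subset hfin
  have huv' := ae_restrict_of_ae_restrict_of_subset interior_subset huv
  have hv_ae : ∀ᵐ x ∂volume.restrict (interior P), v x ≠ ⊤ := by
    filter_upwards [hu_ae, huv'] with x hx hxv
    rwa [← hxv]
  have hui := hu.mono interior_subset
  have hvi := hv.mono interior_subset
  have hu_top := fun x hx => hui.ne_top isOpen_interior hu_ae (x := x) hx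
  have hv_top := fun x hx => hvi.ne_top isOpen_interior hv_ae (x := x) hx
  have hint : Set.EqOn u v (interior P) := Measure.eqOn_open_of_ae_eq huv' isOpen_interior
    (hui.continuousOn isOpen_interior hP.interior hu_top)
    (hvi.continuousOn isOpen_interior hP.interior hv_top)
  obtain ⟨q, hq⟩ := hne
  have hu₀' : ∀ x ∈ interior P, u x ≠ 0 := fun x hx => (hu₀ x (interior_subset hx)).ne'
  intro x hx
  rw [← eqOn_radialEnvelope hP hu hu_lsc hu₀' hq (hu_top q hq) hx,
    ← eqOn_radialEnvelope hP hv hv_lsc (fun x hx => hint hx ▸ hu₀' x hx) hq (hv_top q hq) hx]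
  refine iSup_congr fun s => ?_
  rw [radialBound, radialBound, hint hq, hint (hP.combo_self_interior_mem_interior hx hq
    (sub_nonneg.2 s.2.2.le) s.2.1 (sub_add_cancel _ _))]

end Limits

section Densities

/-- The lower semicontinuous positive log-convex functions on `P` of `ν`-mass one. -/
def logConvexDensities {n : ℕ} (P : Set (Euc n)) (ν : Measure (Euc n)) : Set (Euc n → ℝ≥0∞) :=
  {u | LowerSemicontinuousOn u P ∧ (∀ x ∈ P, 0 < u x) ∧ LogConvexOn P u ∧ ∫⁻ x, u x ∂ν = 1}

variable {n : ℕ} {P : Set (Euc n)} {ν : Measure (Euc n)} {u v : Euc n → ℝ≥0∞}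

theorem measurable_indicator_of_lowerSemicontinuousOn {α : Type*} [TopologicalSpace α]
    [MeasurableSpace α] [OpensMeasurableSpace α] {s : Set α} {f : α → ℝ≥0∞}
    (hs : MeasurableSet s) (hf : LowerSemicontinuousOn f s) : Measurable (s.indicator f) := by
  classical
  rw [← Set.piecewise_eq_indicator]
  refine measurable_of_restrict_of_restrict_compl hs ?_ ?_
  · rw [Set.domRestrict_piecewise]
    exact (lowerSemicontinuous_restrict_iff.2 hf).measurable
  · rw [Set.domRestrict_piecewise_compl]
    exact measurable_zero.comp measurable_subtype_coe

theorem aemeasurable_of_lowerSemicontinuousOn {α : Type*} [TopologicalSpace α]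
    [MeasurableSpace α] [OpensMeasurableSpace α] {s : Set α} {f : α → ℝ≥0∞} {m : Measure α}
    (hs : MeasurableSet s) (hm : ∀ᵐ x ∂m, x ∈ s) (hf : LowerSemicontinuousOn f s) :
    AEMeasurable f m :=
  ⟨s.indicator f, measurable_indicator_of_lowerSemicontinuousOn hs hf,
    hm.mono fun _ hx => (Set.indicator_of_mem hx f).symm⟩

theorem one_mem_logConvexDensities [IsProbabilityMeasure ν] :
    (fun _ => 1) ∈ logConvexDensities P ν :=
  ⟨continuousOn_const.lowerSemicontinuousOn, fun _ _ => one_pos, fun _ _ _ _ _ _ _ => by simp,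
    by simp⟩

theorem midpoint_mem_logConvexDensities (hu_meas : AEMeasurable u ν)
    (hu : u ∈ logConvexDensities P ν) (hv : v ∈ logConvexDensities P ν) :
    (fun x => 2⁻¹ * (u x + v x)) ∈ logConvexDensities P ν := by
  obtain ⟨hu_lsc, hu_pos, hu_lc, hu_int⟩ := hu
  obtain ⟨hv_lsc, -, hv_lc, hv_int⟩ := hv
  refine ⟨?_, fun x hx => ?_, (hu_lc.add hv_lc).const_mul _, ?_⟩
  · exact (ENNReal.continuous_const_mul (by simp)).comp_lowerSemicontinuousOn (hu_lsc.add hv_lsc)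
      fun a b hab => mul_le_mul_right hab _
  · exact ENNReal.mul_pos (by simp) (by simp [(hu_pos x hx).ne'])
  · rw [lintegral_const_mul' _ _ (by simp), lintegral_add_left' hu_meas, hu_int, hv_int,
      one_add_one_eq_two, ENNReal.inv_mul_cancel (by simp) (by simp)]

end Densities

section Entropy

open InformationTheory

variable {α : Type*} [MeasurableSpace α] {ν : Measure α} {u v : α → ℝ≥0∞}

/-- The relative entropy `∫ (u log u + 1 - u) dν` of the measure `u ν` with respect to `ν`.
It is meant for `u` finite almost everywhere, as `∞` is read as `0`. -/
def relEntropy (ν : Measure α) (u : α → ℝ≥0∞) : ℝ≥0∞ :=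
  ∫⁻ x, ENNReal.ofReal (klFun (u x).toReal) ∂ν

/-- The squared Hellinger distance `∫ (√u - √v)² dν` of `u ν` and `v ν`, meant for `u` and
`v` finite almost everywhere, as `∞` is read as `0`. -/
def hellingerSq (ν : Measure α) (u v : α → ℝ≥0∞) : ℝ≥0∞ :=
  ∫⁻ x, ENNReal.ofReal ((√(u x).toReal - √(v x).toReal) ^ 2) ∂ν

/-- The right side is the Bregman divergence of `klFun` at `x` and `m`. -/
theorem sq_sqrt_sub_sqrt_le {x m : ℝ} (hx : 0 ≤ x) (hm : 0 < m) :
    (√x - √m) ^ 2 ≤ klFun x - klFun m - Real.log m * (x - m) := by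
  have hexpand : (√x - √m) ^ 2 = x + m - 2 * (√x * √m) := by
    rw [sub_sq, Real.sq_sqrt hx, Real.sq_sqrt hm.le]
    ring
  rw [hexpand, klFun_apply, klFun_apply]
  rcases hx.eq_or_lt with rfl | hx
  · rw [Real.sqrt_zero, Real.log_zero]
    linarith
  have hsx := Real.sqrt_pos.2 hx
  have hsm := Real.sqrt_pos.2 hm
  have hlog : (Real.log m - Real.log x) / 2 ≤ √m / √x - 1 := by
    have := Real.log_le_sub_one_of_pos (div_pos hsm hsx)
    rw [Real.log_div hsm.ne' hsx.ne', Real.log_sqrt hm.le, Real.log_sqrt hx.le] at this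
    linarith
  have hmul : x * (√m / √x) = √x * √m := by
    rw [mul_div_assoc', div_eq_iff hsx.ne', mul_right_comm, Real.mul_self_sqrt hx.le]
  linarith [mul_le_mul_of_nonneg_left hlog hx.le, mul_sub x (√m / √x) 1]

theorem klFun_midpoint_add_le {a b : ℝ} (ha : 0 ≤ a) (hb : 0 ≤ b) :
    klFun ((a + b) / 2) + (√a - √b) ^ 2 / 4 ≤ (klFun a + klFun b) / 2 := by
  rcases (add_nonneg ha hb).eq_or_lt with hab | hab
  · obtain rfl : a = 0 := by linarith
    obtain rfl : b = 0 := by linarith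
    simp
  have hm : 0 < (a + b) / 2 := by positivity
  have hpar : (√a - √b) ^ 2 ≤
      2 * ((√a - √((a + b) / 2)) ^ 2 + (√b - √((a + b) / 2)) ^ 2) := by
    linarith [sq_nonneg ((√a - √((a + b) / 2)) + (√b - √((a + b) / 2)))]
  linarith [sq_sqrt_sub_sqrt_le ha hm, sq_sqrt_sub_sqrt_le hb hm]

theorem aemeasurable_ofReal_klFun (hu : AEMeasurable u ν) :
    AEMeasurable (fun x => ENNReal.ofReal (klFun (u x).toReal)) ν :=
  (measurable_klFun.comp_aemeasurable hu.ennreal_toReal).ennreal_ofReal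

theorem aemeasurable_sq_sqrt_sub_sqrt (hu : AEMeasurable u ν) (hv : AEMeasurable v ν) :
    AEMeasurable (fun x => ENNReal.ofReal ((√(u x).toReal - √(v x).toReal) ^ 2)) ν :=
  ((hu.ennreal_toReal.sqrt.sub hv.ennreal_toReal.sqrt).pow_const 2).ennreal_ofReal

theorem relEntropy_one : relEntropy ν (fun _ => 1) = 0 := by
  simp [relEntropy, klFun_one]

theorem relEntropy_congr_ae (huv : u =ᵐ[ν] v) : relEntropy ν u = relEntropy ν v :=
  lintegral_congr_ae (huv.mono fun x hx => by simp only [hx])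

theorem relEntropy_midpoint_add_le (hu : AEMeasurable u ν) (hv : AEMeasurable v ν)
    (hu_top : ∀ᵐ x ∂ν, u x ≠ ⊤) (hv_top : ∀ᵐ x ∂ν, v x ≠ ⊤) :
    relEntropy ν (fun x => 2⁻¹ * (u x + v x)) + 4⁻¹ * hellingerSq ν u v ≤
      2⁻¹ * (relEntropy ν u + relEntropy ν v) := by
  have hmeas := aemeasurable_sq_sqrt_sub_sqrt hu hv
  rw [relEntropy, relEntropy, relEntropy, hellingerSq, ← lintegral_const_mul'' _ hmeas,
    ← lintegral_add_left' (aemeasurable_ofReal_klFun hu), ← lintegral_const_mul' _ _ (by simp),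
    ← lintegral_add_right' _ (hmeas.const_mul _)]
  refine lintegral_mono_ae ?_
  filter_upwards [hu_top, hv_top] with x hux hvx
  lift u x to ℝ≥0 using hux with a
  lift v x to ℝ≥0 using hvx with b
  have hmid : (2⁻¹ * (a + b : ℝ≥0∞)).toReal = ((a : ℝ) + b) / 2 := by
    simp [ENNReal.toReal_add, div_eq_inv_mul]
  have hpoint := ENNReal.ofReal_le_ofReal (klFun_midpoint_add_le a.coe_nonneg b.coe_nonneg)
  rw [ENNReal.ofReal_add (klFun_nonneg (by positivity)) (by positivity),
    ENNReal.ofReal_div_of_pos (by norm_num), ENNReal.ofReal_div_of_pos (by norm_num),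
    ENNReal.ofReal_add (klFun_nonneg a.coe_nonneg) (klFun_nonneg b.coe_nonneg)] at hpoint
  simpa [hmid, ENNReal.div_eq_inv_mul] using hpoint

theorem ae_eq_of_hellingerSq_eq_zero (hu : AEMeasurable u ν) (hv : AEMeasurable v ν)
    (hu_top : ∀ᵐ x ∂ν, u x ≠ ⊤) (hv_top : ∀ᵐ x ∂ν, v x ≠ ⊤) (huv : hellingerSq ν u v = 0) :
    u =ᵐ[ν] v := by
  rw [hellingerSq, lintegral_eq_zero_iff' (aemeasurable_sq_sqrt_sub_sqrt hu hv)] at huv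
  filter_upwards [huv, hu_top, hv_top] with x hx hux hvx
  have hsq : (√(u x).toReal - √(v x).toReal) ^ 2 = 0 :=
    (ENNReal.ofReal_eq_zero.1 hx).antisymm (sq_nonneg _)
  rw [sq_eq_zero_iff, sub_eq_zero, Real.sqrt_inj ENNReal.toReal_nonneg ENNReal.toReal_nonneg] at hsq
  exact (ENNReal.toReal_eq_toReal_iff' hux hvx).1 hsq

theorem relEntropy_le_liminf {w : ℕ → α → ℝ≥0∞} (hw : ∀ k, AEMeasurable (w k) ν)
    (hu_top : ∀ᵐ x ∂ν, u x ≠ ⊤)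
    (hlim : ∀ᵐ x ∂ν, Tendsto (fun k => w k x) atTop (𝓝 (u x))) :
    relEntropy ν u ≤ liminf (fun k => relEntropy ν (w k)) atTop := by
  refine le_trans (lintegral_mono_ae ?_)
    (lintegral_liminf_le' fun k => aemeasurable_ofReal_klFun (hw k))
  filter_upwards [hlim, hu_top] with x hx hux
  exact (ENNReal.tendsto_ofReal ((continuous_klFun.tendsto _).comp
    ((ENNReal.tendsto_toReal hux).comp hx))).liminf_eq.ge

end Entropy

section Hellinger

variable {α : Type*} [MeasurableSpace α] {ν : Measure α} {u v : α → ℝ≥0∞}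

theorem eLpNorm_two_sq_eq_lintegral (f : α → ℝ) :
    eLpNorm f 2 ν ^ 2 = ∫⁻ x, ‖f x‖ₑ ^ 2 ∂ν := by
  have h := eLpNorm_nnreal_pow_eq_lintegral (μ := ν) (f := f) (p := 2) two_ne_zero
  simpa only [NNReal.coe_ofNat, ENNReal.coe_ofNat, ENNReal.rpow_ofNat] using h

theorem hellingerSq_eq_eLpNorm_sq :
    hellingerSq ν u v = eLpNorm (fun x => √(u x).toReal - √(v x).toReal) 2 ν ^ 2 := by
  simp only [eLpNorm_two_sq_eq_lintegral, hellingerSq, Real.enorm_eq_ofReal_abs,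
    ← ENNReal.ofReal_pow (abs_nonneg _), sq_abs]

theorem enorm_sqrt_toReal_sq {a : ℝ≥0∞} (ha : a ≠ ⊤) : ‖√a.toReal‖ₑ ^ 2 = a := by
  rw [Real.enorm_of_nonneg (Real.sqrt_nonneg _), ← ENNReal.ofReal_pow (Real.sqrt_nonneg _),
    Real.sq_sqrt ENNReal.toReal_nonneg, ENNReal.ofReal_toReal ha]

theorem eLpNorm_sqrt_toReal_sq (hu_top : ∀ᵐ x ∂ν, u x ≠ ⊤) :
    eLpNorm (fun x => √(u x).toReal) 2 ν ^ 2 = ∫⁻ x, u x ∂ν := by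
  rw [eLpNorm_two_sq_eq_lintegral]
  exact lintegral_congr_ae (hu_top.mono fun x hx => enorm_sqrt_toReal_sq hx)

theorem exists_subseq_ae_tendsto_of_hellingerSq_le {w : ℕ → α → ℝ≥0∞}
    (hw : ∀ k, AEMeasurable (w k) ν) {m : ℝ≥0∞} (hm : m ≠ ⊤) (hw_int : ∀ k, ∫⁻ x, w k x ∂ν = m)
    {ε : ℕ → ℝ≥0∞} (hε : Tendsto ε atTop (𝓝 0))
    (hcauchy : ∀ i j N, N ≤ i → N ≤ j → hellingerSq ν (w i) (w j) ≤ ε N) :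
    ∃ φ : ℕ → ℕ, StrictMono φ ∧ ∃ f : α → ℝ≥0∞, AEMeasurable f ν ∧ (∀ x, f x ≠ ⊤) ∧
      ∫⁻ x, f x ∂ν = m ∧ ∀ᵐ x ∂ν, Tendsto (fun k => w (φ k) x) atTop (𝓝 (f x)) := by
  have hw_top : ∀ k, ∀ᵐ x ∂ν, w k x ≠ ⊤ := fun k =>
    (ae_lt_top' (hw k) (by rwa [hw_int k])).mono fun x hx => hx.ne
  have hnorm : ∀ k, eLpNorm (fun x => √(w k x).toReal) 2 ν ^ 2 = m := fun k =>
    (eLpNorm_sqrt_toReal_sq (hw_top k)).trans (hw_int k)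
  have hmem : ∀ k, MemLp (fun x => √(w k x).toReal) 2 ν := fun k =>
    ⟨(hw k).ennreal_toReal.sqrt.aestronglyMeasurable,
      (ENNReal.pow_lt_top_iff.1 ((hnorm k).trans_lt hm.lt_top)).resolve_right two_ne_zero⟩
  have hcauchy' : CauchySeq fun k => (hmem k).toLp := by
    refine EMetric.cauchySeq_iff_le_tendsto_0.2
      ⟨fun N => ε N ^ (2⁻¹ : ℝ), fun i j N hi hj => ?_, ?_⟩
    · have hij := hcauchy i j N hi hj
      rw [hellingerSq_eq_eLpNorm_sq] at hij
      rw [Lp.edist_toLp_toLp, ENNReal.le_rpow_inv_iff two_pos]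
      exact_mod_cast hij
    · simpa using hε.ennrpow_const (2⁻¹ : ℝ)
  obtain ⟨F, hF⟩ := cauchySeq_tendsto_of_complete hcauchy'
  obtain ⟨φ, hφ, hφF⟩ := (tendstoInMeasure_of_tendsto_Lp hF).exists_seq_tendsto_ae
  have hF_norm : eLpNorm F 2 ν ^ 2 = m := by
    have := ((ENNReal.continuous_pow 2).tendsto _).comp ((continuous_enorm.tendsto F).comp hF)
    simp only [Function.comp_def, Lp.enorm_toLp, hnorm] at this
    rw [← Lp.enorm_def]
    exact tendsto_nhds_unique this tendsto_const_nhds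
  refine ⟨φ, hφ, fun x => ‖F x‖ₑ ^ 2, ((Lp.aestronglyMeasurable F).enorm.pow_const 2),
    fun x => by simp, by rwa [← eLpNorm_two_sq_eq_lintegral], ?_⟩
  filter_upwards [hφF, ae_all_iff.2 hw_top, ae_all_iff.2 fun k => (hmem k).coeFn_toLp]
    with x hx hwx hcoe
  have := ((ENNReal.continuous_pow 2).tendsto _).comp ((continuous_enorm.tendsto _).comp hx)
  simpa only [Function.comp_def, hcoe, enorm_sqrt_toReal_sq (hwx _)] using this

theorem hellingerSq_le_of_le_relEntropy_midpoint (hu : AEMeasurable u ν) (hv : AEMeasurable v ν)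
    (hu_top : ∀ᵐ x ∂ν, u x ≠ ⊤) (hv_top : ∀ᵐ x ∂ν, v x ≠ ⊤) {s a b : ℝ≥0∞} (hs : s ≠ ⊤)
    (hmid : s ≤ relEntropy ν (fun x => 2⁻¹ * (u x + v x)) + a)
    (hu_le : relEntropy ν u ≤ s + b) (hv_le : relEntropy ν v ≤ s + b) :
    hellingerSq ν u v ≤ 4 * (a + b) := by
  have hquarter : s + 4⁻¹ * hellingerSq ν u v ≤ s + (a + b) := calc
    s + 4⁻¹ * hellingerSq ν u v
      ≤ relEntropy ν (fun x => 2⁻¹ * (u x + v x)) + a + 4⁻¹ * hellingerSq ν u v := by gcongr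
    _ = relEntropy ν (fun x => 2⁻¹ * (u x + v x)) + 4⁻¹ * hellingerSq ν u v + a := by ring
    _ ≤ 2⁻¹ * (relEntropy ν u + relEntropy ν v) + a := by
      gcongr
      exact relEntropy_midpoint_add_le hu hv hu_top hv_top
    _ ≤ 2⁻¹ * ((s + b) + (s + b)) + a := by gcongr
    _ = s + (a + b) := by
      rw [← two_mul, ← mul_assoc, ENNReal.inv_mul_cancel two_ne_zero ENNReal.ofNat_ne_top, one_mul]
      ring
  rw [ENNReal.add_le_add_iff_left hs] at hquarter
  calc hellingerSq ν u v = 4 * (4⁻¹ * hellingerSq ν u v) := by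
        rw [← mul_assoc, ENNReal.mul_inv_cancel four_ne_zero ENNReal.ofNat_ne_top, one_mul]
    _ ≤ 4 * (a + b) := by gcongr

theorem tendsto_inv_natCast_add_one :
    Tendsto (fun k : ℕ => ((k : ℝ≥0∞) + 1)⁻¹) atTop (𝓝 0) := by
  simpa [Function.comp_def] using
    ENNReal.tendsto_inv_nat_nhds_zero.comp (tendsto_add_atTop_nat 1)

/-- Elements of `K k` nearly minimizing the relative entropy form a Hellinger-Cauchy sequence. -/
theorem exists_ae_tendsto_of_midpoint_mem {K : ℕ → Set (α → ℝ≥0∞)} (hK : Antitone K)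
    (hK_meas : ∀ k, ∀ u ∈ K k, AEMeasurable u ν) {m : ℝ≥0∞} (hm : m ≠ ⊤)
    (hK_int : ∀ k, ∀ u ∈ K k, ∫⁻ x, u x ∂ν = m)
    (hK_mid : ∀ k, ∀ u ∈ K k, ∀ v ∈ K k, (fun x => 2⁻¹ * (u x + v x)) ∈ K k)
    (hs : ⨆ k, ⨅ u ∈ K k, relEntropy ν u ≠ ⊤) :
    ∃ w : ℕ → α → ℝ≥0∞, (∀ k, w k ∈ K k) ∧ ∃ f : α → ℝ≥0∞, AEMeasurable f ν ∧ (∀ x, f x ≠ ⊤) ∧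
      ∫⁻ x, f x ∂ν = m ∧ (∀ᵐ x ∂ν, Tendsto (fun k => w k x) atTop (𝓝 (f x))) ∧
      relEntropy ν f ≤ ⨆ k, ⨅ u ∈ K k, relEntropy ν u := by
  set s : ℕ → ℝ≥0∞ := fun k => ⨅ u ∈ K k, relEntropy ν u
  have hs_mono : Monotone s := fun k l hkl => biInf_mono fun u hu => hK hkl hu
  have hs_top : ∀ k, s k ≠ ⊤ := fun k => ne_top_of_le_ne_top hs (le_iSup s k)
  have hs_sub : Tendsto (fun k => (⨆ l, s l) - s k) atTop (𝓝 0) := by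
    simpa using ENNReal.Tendsto.sub tendsto_const_nhds (tendsto_atTop_iSup hs_mono) (Or.inl hs)
  have hnear : ∀ k, ∃ u ∈ K k, relEntropy ν u < s k + ((k : ℝ≥0∞) + 1)⁻¹ := fun k => by
    simpa only [s, iInf_lt_iff, exists_prop] using
      ENNReal.lt_add_right (hs_top k) (ENNReal.inv_ne_zero.2 (by simp))
  choose w hwK hw_lt using hnear
  have hw_le : ∀ k, relEntropy ν (w k) ≤ (⨆ l, s l) + ((k : ℝ≥0∞) + 1)⁻¹ := fun k =>
    (hw_lt k).le.trans (add_le_add_left (le_iSup s k) _)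
  have hw_top : ∀ k, ∀ᵐ x ∂ν, w k x ≠ ⊤ := fun k =>
    (ae_lt_top' (hK_meas k _ (hwK k)) (by rwa [hK_int k _ (hwK k)])).mono fun x hx => hx.ne
  have hcauchy : ∀ i j N, N ≤ i → N ≤ j → hellingerSq ν (w i) (w j) ≤
      4 * ((⨆ l, s l) - s N + ((N : ℝ≥0∞) + 1)⁻¹) := by
    intro i j N hi hj
    refine hellingerSq_le_of_le_relEntropy_midpoint (hK_meas i _ (hwK i)) (hK_meas j _ (hwK j))
      (hw_top i) (hw_top j) hs ?_ ((hw_le i).trans (by gcongr)) ((hw_le j).trans (by gcongr))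
    exact (le_add_tsub (b := s N)).trans
      (add_le_add_left (iInf₂_le _ (hK_mid N _ (hK hi (hwK i)) _ (hK hj (hwK j)))) _)
  have hε := ENNReal.Tendsto.const_mul (a := 4) (hs_sub.add tendsto_inv_natCast_add_one)
    (Or.inr ENNReal.ofNat_ne_top)
  rw [add_zero, mul_zero] at hε
  obtain ⟨φ, hφ, f, hf_meas, hf_top, hf_int, hlim⟩ := exists_subseq_ae_tendsto_of_hellingerSq_le
    (fun k => hK_meas k _ (hwK k)) hm (fun k => hK_int k _ (hwK k)) hε hcauchy
  refine ⟨fun k => w (φ k), fun k => hK (hφ.id_le k) (hwK (φ k)), f, hf_meas, hf_top, hf_int, hlim,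
    (relEntropy_le_liminf (fun k => hK_meas _ _ (hwK (φ k))) (ae_of_all _ hf_top) hlim).trans ?_⟩
  have hlim' := (tendsto_const_nhds (x := ⨆ l, s l)).add
    (tendsto_inv_natCast_add_one.comp hφ.tendsto_atTop)
  rw [add_zero] at hlim'
  exact (liminf_le_liminf (Eventually.of_forall fun k => hw_le (φ k))).trans_eq hlim'.liminf_eq

end Hellinger

section FreeEnergy

theorem add_liminf_le_liminf_add {ι : Type*} {l : Filter ι} (a b : ι → ℝ≥0∞) :
    liminf a l + liminf b l ≤ liminf (fun k => a k + b k) l := by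
  simp only [liminf_eq_iSup_iInf]
  refine ENNReal.biSup_add_biSup_le' ⟨_, univ_mem⟩ ⟨_, univ_mem⟩ fun s hs t ht => ?_
  exact le_iSup₂_of_le (s ∩ t) (inter_mem hs ht) <| le_iInf₂ fun i hi =>
    add_le_add (iInf₂_le i hi.1) (iInf₂_le i hi.2)

theorem inv_two_mul_add_le {a b c : ℝ≥0∞} (ha : a ≤ c) (hb : b ≤ c) : 2⁻¹ * (a + b) ≤ c := calc
  2⁻¹ * (a + b) ≤ 2⁻¹ * (2 * c) := by
    rw [two_mul]
    gcongr
  _ = c := by rw [← mul_assoc, ENNReal.inv_mul_cancel two_ne_zero ENNReal.ofNat_ne_top, one_mul]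

variable {α : Type*} [MeasurableSpace α]

/-- The free energy `∫ u dτ + t H(u)` at temperature `t`, with boundary measure `τ` and the
entropy taken relative to `ν`. -/
def freeEnergy (ν τ : Measure α) (t : ℝ≥0∞) (u : α → ℝ≥0∞) : ℝ≥0∞ :=
  ∫⁻ x, u x ∂τ + t * relEntropy ν u

variable {ν τ : Measure α} {t : ℝ≥0∞} {u v : α → ℝ≥0∞}

theorem freeEnergy_one : freeEnergy ν τ t (fun _ => 1) = τ Set.univ := by
  rw [freeEnergy, relEntropy_one, mul_zero, add_zero, lintegral_one]

theorem freeEnergy_midpoint_add_le (hu_τ : AEMeasurable u τ) (hu : AEMeasurable u ν)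
    (hv : AEMeasurable v ν) (hu_top : ∀ᵐ x ∂ν, u x ≠ ⊤) (hv_top : ∀ᵐ x ∂ν, v x ≠ ⊤) :
    freeEnergy ν τ t (fun x => 2⁻¹ * (u x + v x)) + t * (4⁻¹ * hellingerSq ν u v) ≤
      2⁻¹ * (freeEnergy ν τ t u + freeEnergy ν τ t v) := by
  simp only [freeEnergy]
  rw [lintegral_const_mul' _ _ (by simp), lintegral_add_left' hu_τ, add_assoc, ← mul_add]
  calc _ ≤ 2⁻¹ * (∫⁻ x, u x ∂τ + ∫⁻ x, v x ∂τ) + t * (2⁻¹ * (relEntropy ν u + relEntropy ν v)) := by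
        gcongr
        exact relEntropy_midpoint_add_le hu hv hu_top hv_top
    _ = _ := by ring

theorem freeEnergy_le_liminf {w : ℕ → α → ℝ≥0∞} (hw : ∀ k, AEMeasurable (w k) ν)
    (hu_top : ∀ᵐ x ∂ν, u x ≠ ⊤) (hlim : ∀ᵐ x ∂ν, Tendsto (fun k => w k x) atTop (𝓝 (u x)))
    (hτ : ∫⁻ x, u x ∂τ ≤ liminf (fun k => ∫⁻ x, w k x ∂τ) atTop) :
    freeEnergy ν τ t u ≤ liminf (fun k => freeEnergy ν τ t (w k)) atTop := by
  have hsmul : ∀ f : α → ℝ≥0∞, t * relEntropy ν f = relEntropy (t • ν) f := fun f => by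
    rw [relEntropy, relEntropy, lintegral_smul_measure, smul_eq_mul]
  simp only [freeEnergy, hsmul]
  exact (add_le_add hτ (relEntropy_le_liminf (fun k => (hw k).smul_measure t)
    (Measure.ae_smul_measure hu_top t) (Measure.ae_smul_measure hlim t))).trans
    (add_liminf_le_liminf_add _ _)

end FreeEnergy

section Minimizers

variable {n : ℕ} {P : Set (Euc n)} {ν τ : Measure (Euc n)} {t : ℝ≥0∞} {u v : Euc n → ℝ≥0∞}

/-- Among the log-convex densities, `u` minimizes the free energy at temperature `t`, and has least
relative entropy among the minimizers (the second condition matters for `t = 0`). -/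
structure IsEntropicMinimizer (P : Set (Euc n)) (ν τ : Measure (Euc n)) (t : ℝ≥0∞)
    (u : Euc n → ℝ≥0∞) : Prop where
  mem : u ∈ logConvexDensities P ν
  le : ∀ v ∈ logConvexDensities P ν, freeEnergy ν τ t u ≤ freeEnergy ν τ t v
  relEntropy_le : ∀ v ∈ logConvexDensities P ν, freeEnergy ν τ t v ≤ freeEnergy ν τ t u →
    relEntropy ν u ≤ relEntropy ν v

theorem ae_ne_top_of_mem_logConvexDensities (hu_meas : AEMeasurable u ν)
    (hu : u ∈ logConvexDensities P ν) : ∀ᵐ x ∂ν, u x ≠ ⊤ :=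
  (ae_lt_top' hu_meas (by simp [hu.2.2.2])).mono fun _ hx => hx.ne

theorem exists_mem_logConvexDensities_of_ae_tendsto (hP : Convex ℝ P) (hP' : MeasurableSet P)
    (hν : ae ν = ae (volume.restrict P)) (hτ : ∀ᵐ x ∂τ, x ∈ P) {w : ℕ → Euc n → ℝ≥0∞}
    {f : Euc n → ℝ≥0∞} (hw : ∀ k, w k ∈ logConvexDensities P ν) (hf : ∀ᵐ x ∂ν, f x ≠ ⊤)
    (hf_int : ∫⁻ x, f x ∂ν = 1)
    (hlim : ∀ᵐ x ∂ν, Tendsto (fun k => w k x) atTop (𝓝 (f x))) :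
    ∃ u ∈ logConvexDensities P ν, u =ᵐ[ν] f ∧
      ∫⁻ x, u x ∂τ ≤ liminf (fun k => ∫⁻ x, w k x ∂τ) atTop := by
  have hf₀ : ¬f =ᵐ[ν] 0 := fun hf₀ => by simp [lintegral_congr_ae hf₀] at hf_int
  rw [hν] at hlim hf
  rw [EventuallyEq, hν] at hf₀
  obtain ⟨u, hu_lsc, hu_pos, hu_lc, huf, hu_le⟩ :=
    exists_logConvexOn_of_ae_tendsto hP (fun k => (hw k).2.2.1) hlim hf hf₀
  rw [EventuallyEq, ← hν] at huf
  refine ⟨u, ⟨hu_lsc, hu_pos, hu_lc, (lintegral_congr_ae huf).trans hf_int⟩, huf, ?_⟩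
  exact (lintegral_mono_ae (hτ.mono hu_le)).trans (lintegral_liminf_le' fun k =>
    aemeasurable_of_lowerSemicontinuousOn hP' hτ (hw k).1)

theorem freeEnergy_midpoint_add_le_of_le (hP' : MeasurableSet P) (hνP : ∀ᵐ x ∂ν, x ∈ P)
    (hτ : ∀ᵐ x ∂τ, x ∈ P) (hu : u ∈ logConvexDensities P ν) (hv : v ∈ logConvexDensities P ν)
    {c : ℝ≥0∞} (hu_le : freeEnergy ν τ t u ≤ c) (hv_le : freeEnergy ν τ t v ≤ c) :
    freeEnergy ν τ t (fun x => 2⁻¹ * (u x + v x)) + t * (4⁻¹ * hellingerSq ν u v) ≤ c :=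
  have hu_meas := aemeasurable_of_lowerSemicontinuousOn hP' hνP hu.1
  have hv_meas := aemeasurable_of_lowerSemicontinuousOn hP' hνP hv.1
  (freeEnergy_midpoint_add_le (aemeasurable_of_lowerSemicontinuousOn hP' hτ hu.1) hu_meas hv_meas
    (ae_ne_top_of_mem_logConvexDensities hu_meas hu)
    (ae_ne_top_of_mem_logConvexDensities hv_meas hv)).trans (inv_two_mul_add_le hu_le hv_le)

/-- The log-convex densities whose free energy is within `1 / (k + 1)` of the infimum. -/
def nearMinimizers (P : Set (Euc n)) (ν τ : Measure (Euc n)) (t : ℝ≥0∞) (k : ℕ) :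
    Set (Euc n → ℝ≥0∞) :=
  {u ∈ logConvexDensities P ν | freeEnergy ν τ t u ≤
    (⨅ v ∈ logConvexDensities P ν, freeEnergy ν τ t v) + ((k : ℝ≥0∞) + 1)⁻¹}

theorem antitone_nearMinimizers : Antitone (nearMinimizers P ν τ t) :=
  fun _ _ hkl _ hu => ⟨hu.1, hu.2.trans (by gcongr)⟩

theorem iInf_freeEnergy_ne_top [IsProbabilityMeasure ν] [IsFiniteMeasure τ] :
    ⨅ u ∈ logConvexDensities P ν, freeEnergy ν τ t u ≠ ⊤ :=
  ne_top_of_le_ne_top (measure_ne_top τ _)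
    ((iInf₂_le _ one_mem_logConvexDensities).trans_eq freeEnergy_one)

theorem nearMinimizers_nonempty [IsProbabilityMeasure ν] [IsFiniteMeasure τ] (k : ℕ) :
    (nearMinimizers P ν τ t k).Nonempty := by
  have hlt := ENNReal.lt_add_right (iInf_freeEnergy_ne_top (P := P) (ν := ν) (τ := τ) (t := t))
    (ENNReal.inv_ne_zero.2 (by simp : (k : ℝ≥0∞) + 1 ≠ ⊤))
  obtain ⟨u, hu, huk⟩ : ∃ u ∈ logConvexDensities P ν, freeEnergy ν τ t u <
      (⨅ v ∈ logConvexDensities P ν, freeEnergy ν τ t v) + ((k : ℝ≥0∞) + 1)⁻¹ := by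
    simpa only [iInf_lt_iff, exists_prop] using hlt
  exact ⟨u, hu, huk.le⟩

theorem iSup_iInf_relEntropy_nearMinimizers_ne_top [IsProbabilityMeasure ν] [IsFiniteMeasure τ]
    (hH : ∀ C ≠ ⊤, ∃ B ≠ ⊤, ∀ u ∈ logConvexDensities P ν, ∫⁻ x, u x ∂τ ≤ C → relEntropy ν u ≤ B) :
    ⨆ k, ⨅ u ∈ nearMinimizers P ν τ t k, relEntropy ν u ≠ ⊤ := by
  obtain ⟨B, hB, hHB⟩ := hH ((⨅ u ∈ logConvexDensities P ν, freeEnergy ν τ t u) + 1)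
    (ENNReal.add_ne_top.2 ⟨iInf_freeEnergy_ne_top, ENNReal.one_ne_top⟩)
  refine ne_top_of_le_ne_top hB (iSup_le fun k => ?_)
  obtain ⟨u, hu⟩ := nearMinimizers_nonempty (P := P) (ν := ν) (τ := τ) (t := t) k
  refine (iInf₂_le u hu).trans (hHB u hu.1 ((le_self_add.trans hu.2).trans ?_))
  gcongr
  simp

theorem exists_isEntropicMinimizer [IsProbabilityMeasure ν] [IsFiniteMeasure τ]
    (hP : Convex ℝ P) (hP' : MeasurableSet P) (hν : ae ν = ae (volume.restrict P))
    (hτ : ∀ᵐ x ∂τ, x ∈ P)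
    (hH : ∀ C ≠ ⊤, ∃ B ≠ ⊤, ∀ u ∈ logConvexDensities P ν, ∫⁻ x, u x ∂τ ≤ C → relEntropy ν u ≤ B) :
    ∃ u, IsEntropicMinimizer P ν τ t u := by
  have hνP : ∀ᵐ x ∂ν, x ∈ P := hν ▸ ae_restrict_mem hP'
  have hmeas : ∀ u ∈ logConvexDensities P ν, AEMeasurable u ν := fun u hu =>
    aemeasurable_of_lowerSemicontinuousOn hP' hνP hu.1
  obtain ⟨w, hw, f, -, hf_top, hf_int, hlim, hfH⟩ :=
    exists_ae_tendsto_of_midpoint_mem (ν := ν) (antitone_nearMinimizers (P := P) (τ := τ) (t := t))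
      (fun k u hu => hmeas u hu.1) ENNReal.one_ne_top (fun k u hu => hu.1.2.2.2)
      (fun k u hu v hv => ⟨midpoint_mem_logConvexDensities (hmeas u hu.1) hu.1 hv.1,
        le_self_add.trans (freeEnergy_midpoint_add_le_of_le hP' hνP hτ hu.1 hv.1 hu.2 hv.2)⟩)
      (iSup_iInf_relEntropy_nearMinimizers_ne_top hH)
  obtain ⟨u, hu, huf, hu_le⟩ := exists_mem_logConvexDensities_of_ae_tendsto hP hP' hν hτ
    (fun k => (hw k).1) (ae_of_all _ hf_top) hf_int hlim
  have hlim_u : ∀ᵐ x ∂ν, Tendsto (fun k => w k x) atTop (𝓝 (u x)) := by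
    filter_upwards [hlim, huf] with x hx hux
    rwa [hux]
  set c := ⨅ u ∈ logConvexDensities P ν, freeEnergy ν τ t u
  have hc_lim : Tendsto (fun k : ℕ => c + ((k : ℝ≥0∞) + 1)⁻¹) atTop (𝓝 c) := by
    simpa using tendsto_const_nhds.add tendsto_inv_natCast_add_one
  have hu_min : freeEnergy ν τ t u ≤ c := calc
    freeEnergy ν τ t u ≤ liminf (fun k => freeEnergy ν τ t (w k)) atTop :=
      freeEnergy_le_liminf (fun k => hmeas _ (hw k).1)
        (ae_ne_top_of_mem_logConvexDensities (hmeas u hu) hu) hlim_u hu_le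
    _ ≤ liminf (fun k : ℕ => c + ((k : ℝ≥0∞) + 1)⁻¹) atTop :=
      liminf_le_liminf (Eventually.of_forall fun k => (hw k).2)
    _ = c := hc_lim.liminf_eq
  refine ⟨u, hu, fun v hv => hu_min.trans (iInf₂_le v hv), fun v hv hvu => ?_⟩
  rw [relEntropy_congr_ae huf]
  exact hfH.trans (iSup_le fun k => iInf₂_le v ⟨hv, (hvu.trans hu_min).trans le_self_add⟩)

theorem IsEntropicMinimizer.eqOn (hu : IsEntropicMinimizer P ν τ t u) (hP : Convex ℝ P)
    (hP' : MeasurableSet P) (hne : (interior P).Nonempty) (hν : ae ν = ae (volume.restrict P))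
    (hτ : ∀ᵐ x ∂τ, x ∈ P) (hF : freeEnergy ν τ t u ≠ ⊤) (hH : relEntropy ν u ≠ ⊤)
    (hv : v ∈ logConvexDensities P ν) (hvF : freeEnergy ν τ t v ≤ freeEnergy ν τ t u)
    (h : t ≠ 0 ∨ relEntropy ν v ≤ relEntropy ν u) : Set.EqOn v u P := by
  have hνP : ∀ᵐ x ∂ν, x ∈ P := hν ▸ ae_restrict_mem hP'
  have hu_meas := aemeasurable_of_lowerSemicontinuousOn hP' hνP hu.mem.1
  have hv_meas := aemeasurable_of_lowerSemicontinuousOn hP' hνP hv.1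
  have hu_top := ae_ne_top_of_mem_logConvexDensities hu_meas hu.mem
  have hv_top := ae_ne_top_of_mem_logConvexDensities hv_meas hv
  have hmid_mem := midpoint_mem_logConvexDensities hv_meas hv hu.mem
  have hmid := freeEnergy_midpoint_add_le_of_le hP' hνP hτ hv hu.mem hvF le_rfl
  have hdist : hellingerSq ν v u = 0 := by
    rcases h with ht | hvH
    · have h0 := (add_le_add_left (hu.le _ hmid_mem) _).trans (hmid.trans_eq (add_zero _).symm)
      rw [ENNReal.add_le_add_iff_left hF, nonpos_iff_eq_zero] at h0
      simpa [ht] using h0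
    · have hmid_le := hu.relEntropy_le _ hmid_mem (le_self_add.trans hmid)
      simpa using hellingerSq_le_of_le_relEntropy_midpoint hv_meas hu_meas hv_top hu_top hH
        (hmid_le.trans_eq (add_zero _).symm) (hvH.trans_eq (add_zero _).symm) (add_zero _).ge
  have hae := ae_eq_of_hellingerSq_eq_zero hv_meas hu_meas hv_top hu_top hdist
  rw [EventuallyEq, hν] at hae
  rw [hν] at hv_top
  exact hv.2.2.1.eqOn_of_ae_eq hP hne hu.mem.2.2.1 hv.1 hu.mem.1 hv.2.1 hv_top hae

end Minimizers

section Polyhedra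

variable {E : Type*} [NormedAddCommGroup E] [NormedSpace ℝ E] {ℓ : E →ᵃ[ℝ] ℝ}
  {J : Finset (E →ᵃ[ℝ] ℝ)} {x v : E}

/-- The intersection of the closed half-spaces `0 ≤ ℓ` over a finite set `J` of affine functions;
a redundant inequality is one that can be erased from `J` without changing the polyhedron. -/
def polyhedron (J : Finset (E →ᵃ[ℝ] ℝ)) : Set E := {x | ∀ ℓ ∈ J, 0 ≤ ℓ x}

theorem affineMap_add_smul (ℓ : E →ᵃ[ℝ] ℝ) (x v : E) (t : ℝ) :
    ℓ (x + t • v) = ℓ x + t * ℓ.linear v := by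
  rw [add_comm, ← vadd_eq_add, ℓ.map_vadd, map_smul, smul_eq_mul, vadd_eq_add, add_comm]

theorem convex_polyhedron (J : Finset (E →ᵃ[ℝ] ℝ)) : Convex ℝ (polyhedron J) := by
  rw [polyhedron, Set.ofPred_forall]
  refine convex_iInter fun ℓ => ?_
  rw [Set.ofPred_forall]
  exact convex_iInter fun _ => (convex_Ici (0 : ℝ)).affine_preimage ℓ

theorem pos_of_mem_interior {P : Set E} (hℓ : ℓ ≠ 0) (hP : ∀ y ∈ P, 0 ≤ ℓ y)
    (hx : x ∈ interior P) : 0 < ℓ x := by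
  by_cases hlin : ℓ.linear = 0
  · refine (hP x (interior_subset hx)).lt_of_ne fun h0 => hℓ (AffineMap.ext fun y => ?_)
    have hy := affineMap_add_smul ℓ x (y - x) 1
    simpa [hlin, ← h0] using hy
  · have hopen : IsOpenMap ℓ := AffineMap.isOpenMap_linear_iff.1
      (ℓ.linear.isOpenMap_of_finiteDimensional (LinearMap.surjective hlin))
    have himage : ℓ '' interior P ⊆ interior (Set.Ici 0) :=
      interior_maximal (Set.image_subset_iff.2 fun y hy => hP y (interior_subset hy))
        (hopen _ isOpen_interior)
    simpa using himage (Set.mem_image_of_mem ℓ hx)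

open Classical in
theorem exists_eq_zero_forall_erase_pos {q : E} (hq : ∀ ℓ ∈ J, 0 < ℓ q) (hℓ : ℓ ∈ J)
    (hJ : polyhedron (J.erase ℓ) ≠ polyhedron J) : ∃ z, ℓ z = 0 ∧ ∀ k ∈ J.erase ℓ, 0 < k z := by
  obtain ⟨y, hy, hyJ⟩ : ∃ y ∈ polyhedron (J.erase ℓ), y ∉ polyhedron J := by
    by_contra! h
    exact hJ (Set.Subset.antisymm h fun x hx k hk => hx k (Finset.mem_of_mem_erase hk))
  have hℓy : ℓ y < 0 := by
    by_contra! h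
    refine hyJ fun k hk => ?_
    by_cases hkℓ : k = ℓ
    · exact hkℓ ▸ h
    · exact hy k (Finset.mem_erase.2 ⟨hkℓ, hk⟩)
  obtain ⟨s, ⟨hs₀, hs₁⟩, hs⟩ : ∃ s ∈ Set.Ioo (0 : ℝ) 1, ℓ q + s * ℓ.linear (y - q) = 0 := by
    have hcont : ContinuousOn (fun s : ℝ => ℓ q + s * ℓ.linear (y - q)) (Set.Icc 0 1) := by
      fun_prop
    refine intermediate_value_Ioo' zero_le_one hcont ⟨?_, by simpa using hq ℓ hℓ⟩
    rwa [← affineMap_add_smul, one_smul, add_sub_cancel]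
  refine ⟨q + s • (y - q), by rw [affineMap_add_smul, hs], fun k hk => ?_⟩
  have hky : k.linear (y - q) = k y - k q := k.linearMap_vsub y q
  rw [affineMap_add_smul, hky]
  nlinarith [hq k (Finset.mem_of_mem_erase hk), hy k hk]

variable [FiniteDimensional ℝ E]

theorem eventually_mem_polyhedron (hx : ∀ ℓ ∈ J, 0 < ℓ x) : ∀ᶠ y in 𝓝 x, y ∈ polyhedron J := by
  refine (Filter.eventually_all_finset J).2 fun ℓ hℓ => ?_
  exact (ℓ.continuous_of_finiteDimensional.tendsto x).eventually_const_le (hx ℓ hℓ)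

theorem exists_eq_zero_of_mem_frontier_polyhedron (hx : x ∈ frontier (polyhedron J))
    (hxJ : x ∈ polyhedron J) : ∃ ℓ ∈ J, ℓ x = 0 := by
  by_contra! h
  exact hx.2 (mem_interior_iff_mem_nhds.2
    (eventually_mem_polyhedron fun ℓ hℓ => (hxJ ℓ hℓ).lt_of_ne (h ℓ hℓ).symm))

theorem exists_pos_add_smul_mem_polyhedron (hx : x ∈ polyhedron J)
    (hv : ∀ ℓ ∈ J, ℓ x = 0 → ℓ.linear v = 0) : ∃ t > (0 : ℝ), x + t • v ∈ polyhedron J := by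
  have hcont : Tendsto (fun t : ℝ => x + t • v) (𝓝 0) (𝓝 x) := by
    have : Continuous fun t : ℝ => x + t • v := by fun_prop
    simpa using this.tendsto 0
  have hmem : ∀ᶠ t : ℝ in 𝓝 0, x + t • v ∈ polyhedron J := by
    refine (Filter.eventually_all_finset J).2 fun ℓ hℓ => ?_
    rcases (hx ℓ hℓ).eq_or_lt with h0 | hpos
    · exact Eventually.of_forall fun t => by rw [affineMap_add_smul, ← h0, hv ℓ hℓ h0.symm]; simp
    · exact ((ℓ.continuous_of_finiteDimensional.tendsto x).comp hcont).eventually_const_le hpos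
  exact ((hmem.filter_mono nhdsWithin_le_nhds).and
    (self_mem_nhdsWithin : ∀ᶠ t in 𝓝[>] (0 : ℝ), 0 < t)).exists.imp fun _ h => ⟨h.2, h.1⟩

theorem exists_exit_polyhedron (hJ : IsCompact (polyhedron J)) (hx : x ∈ polyhedron J)
    (hv : v ≠ 0) :
    ∃ t ≥ (0 : ℝ), x + t • v ∈ polyhedron J ∧ ∃ ℓ ∈ J, ℓ (x + t • v) = 0 ∧ ℓ.linear v ≠ 0 := by
  have hemb : IsClosedEmbedding fun t : ℝ => x + t • v :=
    (Homeomorph.addLeft x).isClosedEmbedding.comp (isClosedEmbedding_smul_left hv)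
  have h0 : (0 : ℝ) ∈ (fun t : ℝ => x + t • v) ⁻¹' polyhedron J := by simpa using hx
  obtain ⟨t, ht, ht_max⟩ := (hemb.isCompact_preimage hJ).exists_isGreatest ⟨0, h0⟩
  refine ⟨t, ht_max h0, ht, ?_⟩
  by_contra! h
  obtain ⟨s, hs, hs_mem⟩ := exists_pos_add_smul_mem_polyhedron ht h
  have hts : t + s ≤ t := ht_max (by simpa [add_smul, add_assoc] using hs_mem)
  linarith

theorem vectorSpan_polyhedron_inter_eq_ker {z : E} (hz : z ∈ polyhedron J) (hℓz : ℓ z = 0)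
    (hpos : ∀ k ∈ J, k z = 0 → k = ℓ) :
    vectorSpan ℝ {x ∈ polyhedron J | ℓ x = 0} = LinearMap.ker ℓ.linear := by
  apply le_antisymm
  · rw [vectorSpan_def, Submodule.span_le]
    rintro _ ⟨a, ha, b, hb, rfl⟩
    rw [SetLike.mem_coe, LinearMap.mem_ker, AffineMap.linearMap_vsub, ha.2, hb.2, vsub_self]
  · intro v hv
    obtain ⟨t, ht, htz⟩ := exists_pos_add_smul_mem_polyhedron hz (v := v)
      fun k hk hkz => hpos k hk hkz ▸ hv
    have hmem : z + t • v ∈ {x ∈ polyhedron J | ℓ x = 0} :=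
      ⟨htz, by rw [affineMap_add_smul, hℓz, LinearMap.mem_ker.1 hv, mul_zero, add_zero]⟩
    have hdiff := vsub_mem_vectorSpan ℝ hmem ⟨hz, hℓz⟩
    rw [vsub_eq_sub, add_sub_cancel_left] at hdiff
    exact (Submodule.smul_mem_iff _ ht.ne').1 hdiff

end Polyhedra

section Polytopes

variable {n : ℕ} {P F : Set (Euc n)} {J : Finset (Euc n →ᵃ[ℝ] ℝ)} {ℓ : Euc n →ᵃ[ℝ] ℝ}

open Classical in
theorem IsPolytope.exists_irredundant (hP : IsPolytope P) :
    ∃ J : Finset (Euc n →ᵃ[ℝ] ℝ), polyhedron J = P ∧ (∀ ℓ ∈ J, ℓ ≠ 0) ∧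
      ∀ ℓ ∈ J, polyhedron (J.erase ℓ) ≠ P := by
  obtain ⟨-, -, m, L, hL, rfl⟩ := hP
  obtain ⟨J, ⟨hJ, hJ₀⟩, hJ_min⟩ := exists_minimal_of_wellFoundedLT
    (fun J : Finset (Euc n →ᵃ[ℝ] ℝ) => polyhedron J = ⋂ k, {x | 0 ≤ L k x} ∧ ∀ ℓ ∈ J, ℓ ≠ 0)
    ⟨Finset.univ.image L, by ext; simp [polyhedron], by simpa using hL⟩
  refine ⟨J, hJ, hJ₀, fun ℓ hℓ h => Finset.notMem_erase ℓ J ?_⟩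
  exact hJ_min ⟨h, fun k hk => hJ₀ k (Finset.mem_of_mem_erase hk)⟩ (Finset.erase_subset ℓ J) hℓ

open Classical in
theorem isFacetOf_polyhedron (hne : (interior (polyhedron J)).Nonempty) (hJ₀ : ∀ k ∈ J, k ≠ 0)
    (hℓ : ℓ ∈ J) (hJ : polyhedron (J.erase ℓ) ≠ polyhedron J) :
    IsFacetOf (polyhedron J) {x ∈ polyhedron J | ℓ x = 0} := by
  obtain ⟨q, hq⟩ := hne
  have hpos : ∀ k ∈ J, 0 < k q := fun k hk =>
    pos_of_mem_interior (P := polyhedron J) (hJ₀ k hk) (fun _ hy => hy k hk) hq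
  obtain ⟨z, hℓz, hz⟩ := exists_eq_zero_forall_erase_pos hpos hℓ hJ
  have hz_mem : z ∈ polyhedron J := fun k hk => by
    by_cases hkℓ : k = ℓ
    · exact hkℓ ▸ hℓz.ge
    · exact (hz k (Finset.mem_erase.2 ⟨hkℓ, hk⟩)).le
  have hlin : ℓ.linear ≠ 0 := fun h => by
    have hqz : ℓ.linear (q - z) = ℓ q - ℓ z := ℓ.linearMap_vsub q z
    rw [h, hℓz, sub_zero] at hqz
    exact (hpos ℓ hℓ).ne hqz
  refine ⟨⟨ℓ, hJ₀ ℓ hℓ, fun y hy => hy ℓ hℓ, rfl⟩, ?_⟩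
  rw [vectorSpan_polyhedron_inter_eq_ker hz_mem hℓz fun k hk hkz => by
    by_contra hkℓ
    exact (hz k (Finset.mem_erase.2 ⟨hkℓ, hk⟩)).ne' hkz]
  simpa using Module.Dual.finrank_ker_add_one_of_ne_zero hlin

theorem IsPolytope.exists_facet_presentation (hP : IsPolytope P) :
    ∃ J : Finset (Euc n →ᵃ[ℝ] ℝ), polyhedron J = P ∧ ∀ ℓ ∈ J, IsFacetOf P {x ∈ P | ℓ x = 0} := by
  obtain ⟨J, rfl, hJ₀, hJ⟩ := hP.exists_irredundant
  exact ⟨J, rfl, fun ℓ hℓ => isFacetOf_polyhedron hP.2.1 hJ₀ hℓ (hJ ℓ hℓ)⟩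

theorem IsPolytope.convex (hP : IsPolytope P) : Convex ℝ P := by
  obtain ⟨J, rfl, -⟩ := hP.exists_facet_presentation
  exact convex_polyhedron J

theorem IsFaceOf.subset_frontier (hF : IsFaceOf P F) : F ⊆ frontier P := by
  obtain ⟨ℓ, hℓ, hℓP, rfl⟩ := hF
  exact fun x hx => ⟨subset_closure hx.1, fun hi => (pos_of_mem_interior hℓ hℓP hi).ne' hx.2⟩

theorem IsFaceOf.isCompact (hF : IsFaceOf P F) (hP : IsCompact P) : IsCompact F := by
  obtain ⟨ℓ, -, -, rfl⟩ := hF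
  exact hP.inter_right
    (isClosed_eq ℓ.continuous_of_finiteDimensional continuous_const)

end Polytopes

section ObliqueProjection

variable {E : Type*} [NormedAddCommGroup E] [NormedSpace ℝ E]

/-- The projection along the direction `v` onto the hyperplane `ℓ = 0`. It is meant for
`ℓ.linear v ≠ 0`; otherwise division by zero makes it the identity. -/
def obliqueProj (ℓ : E →ᵃ[ℝ] ℝ) (v x : E) : E := x - (ℓ x / ℓ.linear v) • v

variable {ℓ : E →ᵃ[ℝ] ℝ} {v : E}

theorem obliqueProj_of_eq_zero {x : E} (hx : ℓ x = 0) : obliqueProj ℓ v x = x := by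
  simp [obliqueProj, hx]

theorem obliqueProj_add_smul (hv : ℓ.linear v ≠ 0) (x : E) (t : ℝ) :
    obliqueProj ℓ v (x + t • v) = obliqueProj ℓ v x := by
  rw [obliqueProj, obliqueProj, affineMap_add_smul, add_div, mul_div_cancel_right₀ _ hv]
  module

theorem measurable_obliqueProj [FiniteDimensional ℝ E] [MeasurableSpace E] [BorelSpace E]
    (ℓ : E →ᵃ[ℝ] ℝ) (v : E) : Measurable (obliqueProj ℓ v) := by
  have hℓ : Continuous ℓ := ℓ.continuous_of_finiteDimensional
  exact (continuous_id.sub ((hℓ.div_const _).smul continuous_const)).measurable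

end ObliqueProjection

section ChordMajorant

variable {n : ℕ} {J : Finset (Euc n →ᵃ[ℝ] ℝ)} {u : Euc n → ℝ≥0∞} {v : Euc n}

open Classical in
/-- The sum of the values of `u` at the projections of `x` along `v` to the faces of
`polyhedron J` not parallel to `v`, among them the endpoints of the chord through `x` in
direction `v`. -/
def chordMajorant (J : Finset (Euc n →ᵃ[ℝ] ℝ)) (u : Euc n → ℝ≥0∞) (v x : Euc n) : ℝ≥0∞ :=
  ∑ ℓ ∈ J with ℓ.linear v ≠ 0, {y ∈ polyhedron J | ℓ y = 0}.indicator u (obliqueProj ℓ v x)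

theorem chordMajorant_add_smul (x : Euc n) (t : ℝ) :
    chordMajorant J u v (x + t • v) = chordMajorant J u v x :=
  Finset.sum_congr rfl fun ℓ hℓ => by rw [obliqueProj_add_smul (Finset.mem_filter.1 hℓ).2]

theorem le_chordMajorant_of_eq_zero {ℓ : Euc n →ᵃ[ℝ] ℝ} (hℓ : ℓ ∈ J) (hv : ℓ.linear v ≠ 0)
    {y : Euc n} (hy : y ∈ polyhedron J) (hℓy : ℓ y = 0) : u y ≤ chordMajorant J u v y := by
  classical
  refine le_trans (le_of_eq ?_) (Finset.single_le_sum (fun _ _ => zero_le)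
    (Finset.mem_filter.2 ⟨hℓ, hv⟩))
  rw [obliqueProj_of_eq_zero hℓy, Set.indicator_of_mem (by exact ⟨hy, hℓy⟩)]

theorem LogConvexOn.le_chordMajorant (hJ : IsCompact (polyhedron J))
    (hu : LogConvexOn (polyhedron J) u) (hv : v ≠ 0) {x : Euc n} (hx : x ∈ polyhedron J) :
    u x ≤ chordMajorant J u v x := by
  obtain ⟨b, hb, hb_mem, ℓ, hℓ, hℓb, hℓv⟩ := exists_exit_polyhedron hJ hx hv
  obtain ⟨a, ha, ha_mem, k, hk, hka, hkv⟩ := exists_exit_polyhedron hJ hx (neg_ne_zero.2 hv)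
  rw [smul_neg, ← neg_smul] at ha_mem hka
  rw [map_neg, neg_ne_zero] at hkv
  have hub := le_chordMajorant_of_eq_zero (u := u) hℓ hℓv hb_mem hℓb
  have hua := le_chordMajorant_of_eq_zero (u := u) hk hkv ha_mem hka
  rw [chordMajorant_add_smul] at hub hua
  rcases (add_nonneg ha hb).eq_or_lt with hab | hab
  · obtain rfl : b = 0 := by linarith
    simpa using hub
  · have hcombo : (1 - a / (a + b)) • (x + -a • v) + (a / (a + b)) • (x + b • v) = x := by
      have : (1 - a / (a + b)) * -a + a / (a + b) * b = 0 := by field_simp; ring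
      calc _ = x + ((1 - a / (a + b)) * -a + a / (a + b) * b) • v := by module
        _ = x := by rw [this, zero_smul, add_zero]
    have := hu.le_of_le_of_le ha_mem hb_mem hua hub (t := a / (a + b))
      (by positivity) ((div_le_one hab).2 (by linarith))
    rwa [hcombo] at this

theorem measurable_chordMajorant (hJ : IsClosed (polyhedron J))
    (hu : LowerSemicontinuousOn u (polyhedron J)) : Measurable (chordMajorant J u v) := by
  classical
  refine Finset.measurable_sum _ fun ℓ _ => ?_
  have hface : IsClosed {y ∈ polyhedron J | ℓ y = 0} :=
    hJ.inter (isClosed_eq ℓ.continuous_of_finiteDimensional continuous_const)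
  exact (measurable_indicator_of_lowerSemicontinuousOn hface.measurableSet
    (hu.mono fun _ hy => hy.1)).comp (measurable_obliqueProj ℓ v)

end ChordMajorant

section Hausdorff

theorem hausdorffMeasure_lt_top_of_isBounded {E : Type*} [NormedAddCommGroup E] [NormedSpace ℝ E]
    [FiniteDimensional ℝ E] [MeasurableSpace E] [BorelSpace E] {F : Set E}
    (hF : Bornology.IsBounded F) : μH[Module.finrank ℝ (vectorSpan ℝ F)] F < ⊤ := by
  rcases F.eq_empty_or_nonempty with rfl | ⟨q, hq⟩
  · simp
  have hiso : Isometry fun v : vectorSpan ℝ F => (v : E) + q :=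
    (IsometryEquiv.addRight q).isometry.comp isometry_subtype_coe
  have hsub : F ⊆ (fun v : vectorSpan ℝ F => (v : E) + q) ''
      ((fun v : vectorSpan ℝ F => (v : E) + q) ⁻¹' F) := fun x hx =>
    ⟨⟨x - q, vsub_mem_vectorSpan ℝ hx hq⟩, by simpa using hx, by simp⟩
  calc μH[Module.finrank ℝ (vectorSpan ℝ F)] F ≤ _ := measure_mono hsub
    _ = _ := hiso.hausdorffMeasure_image (Or.inl (Nat.cast_nonneg _)) _
    _ < ⊤ := (hiso.antilipschitz.isBounded_preimage hF).measure_lt_top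

variable {m n : ℕ}

/-- The slab of unit width orthogonal to the `i`-th axis. -/
def unitSlab (i : Fin n) : Set (Euc n) := {x | x i ∈ Set.Icc (0 : ℝ) 1}

theorem measurableSet_unitSlab (i : Fin n) : MeasurableSet (unitSlab i) :=
  (show Measurable fun x : Euc n => x i by fun_prop) measurableSet_Icc

theorem lintegral_indicator_unitSlab_add_smul {i : Fin n} {φ : Euc n → ℝ≥0∞}
    (hφ : ∀ x (t : ℝ), φ (x + t • EuclideanSpace.single i 1) = φ x) (x : Euc n) :
    ∫⁻ t : ℝ, (unitSlab i).indicator φ (x + t • EuclideanSpace.single i 1) = φ x := by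
  have hslab (t : ℝ) : (unitSlab i).indicator φ (x + t • EuclideanSpace.single i 1) =
      (Set.Icc (0 : ℝ) 1).indicator (fun _ => φ x) (x i + t) := by
    classical
    rw [Set.indicator_apply, Set.indicator_apply, hφ]
    simp [unitSlab]
  simp_rw [hslab]
  rw [lintegral_add_left_eq_self fun t => (Set.Icc (0 : ℝ) 1).indicator (fun _ => φ x) t]
  simp

theorem lipschitzWith_removeNth (i : Fin (m + 1)) :
    LipschitzWith 1 fun x : Euc (m + 1) => i.removeNth (WithLp.ofLp x) := by
  refine LipschitzWith.of_dist_le_mul fun x y => ?_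
  rw [NNReal.coe_one, one_mul, dist_pi_le_iff dist_nonneg]
  intro j
  simpa [dist_eq_norm, Fin.removeNth] using PiLp.norm_apply_le (x - y) (i.succAbove j)

-- Fubini in the direction `e i`, and forgetting the `i`-th coordinate is 1-Lipschitz.
theorem map_restrict_unitSlab_le_hausdorffMeasure {i : Fin (m + 1)}
    {φ : Euc (m + 1) → Euc (m + 1)} (hφ : Measurable φ)
    (hφi : ∀ x, i.removeNth (WithLp.ofLp (φ x)) = i.removeNth (WithLp.ofLp x)) :
    (volume.restrict (unitSlab i)).map φ ≤ μH[m] := by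
  refine Measure.le_iff.2 fun B hB => ?_
  set π : Euc (m + 1) → Fin m → ℝ := fun x => i.removeNth (WithLp.ofLp x)
  set T := toMeasurable volume (π '' B)
  have hsub : φ ⁻¹' B ∩ unitSlab i ⊆
      (MeasurableEquiv.piFinSuccAbove (fun _ => ℝ) i ∘ WithLp.ofLp) ⁻¹' (Set.Icc 0 1 ×ˢ T) :=
    fun x hx => ⟨hx.2, subset_toMeasurable _ _ ⟨φ x, hx.1, hφi x⟩⟩
  have hmp := (volume_preserving_piFinSuccAbove (fun _ => ℝ) i).comp
    (PiLp.volume_preserving_ofLp (Fin (m + 1)))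
  rw [Measure.map_apply hφ hB, Measure.restrict_apply (hφ hB)]
  calc volume (φ ⁻¹' B ∩ unitSlab i) ≤ _ := measure_mono hsub
    _ = volume (Set.Icc (0 : ℝ) 1 ×ˢ T) := hmp.measure_preimage
      (measurableSet_Icc.prod (measurableSet_toMeasurable _ _)).nullMeasurableSet
    _ = volume (π '' B) := by
      rw [Measure.volume_eq_prod, Measure.prod_prod, measure_toMeasurable]
      simp
    _ = μH[m] (π '' B) := by
      rw [← hausdorffMeasure_pi_real, Fintype.card_fin]
    _ ≤ μH[m] B := by
      simpa using (lipschitzWith_removeNth i).hausdorffMeasure_image_le (Nat.cast_nonneg m) B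

theorem removeNth_obliqueProj_single (ℓ : Euc (m + 1) →ᵃ[ℝ] ℝ) (i : Fin (m + 1))
    (x : Euc (m + 1)) :
    i.removeNth (WithLp.ofLp (obliqueProj ℓ (EuclideanSpace.single i 1) x)) =
      i.removeNth (WithLp.ofLp x) := by
  ext j
  simp [obliqueProj, Fin.removeNth, Fin.succAbove_ne]

theorem setLIntegral_chordMajorant_le {J : Finset (Euc (m + 1) →ᵃ[ℝ] ℝ)}
    (hJ : IsClosed (polyhedron J)) {u : Euc (m + 1) → ℝ≥0∞}
    (hu : LowerSemicontinuousOn u (polyhedron J)) (i : Fin (m + 1)) :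
    ∫⁻ x in unitSlab i, chordMajorant J u (EuclideanSpace.single i 1) x ≤
      ∑ ℓ ∈ J, ∫⁻ x in {y ∈ polyhedron J | ℓ y = 0}, u x ∂μH[m] := by
  classical
  have hface (ℓ : Euc (m + 1) →ᵃ[ℝ] ℝ) : MeasurableSet {y ∈ polyhedron J | ℓ y = 0} :=
    (hJ.inter (isClosed_eq ℓ.continuous_of_finiteDimensional continuous_const)).measurableSet
  have hmeas (ℓ : Euc (m + 1) →ᵃ[ℝ] ℝ) :
      Measurable ({y ∈ polyhedron J | ℓ y = 0}.indicator u) :=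
    measurable_indicator_of_lowerSemicontinuousOn (hface ℓ) (hu.mono fun _ hy => hy.1)
  have hterm (ℓ : Euc (m + 1) →ᵃ[ℝ] ℝ) : Measurable fun x =>
      {y ∈ polyhedron J | ℓ y = 0}.indicator u (obliqueProj ℓ (EuclideanSpace.single i 1) x) :=
    (hmeas ℓ).comp (measurable_obliqueProj ℓ _)
  simp only [chordMajorant]
  rw [lintegral_finsetSum _ fun ℓ _ => hterm ℓ]
  refine (Finset.sum_le_sum_of_subset (Finset.filter_subset _ _)).trans
    (Finset.sum_le_sum fun ℓ _ => ?_)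
  rw [← lintegral_map (hmeas ℓ) (measurable_obliqueProj ℓ _), ← lintegral_indicator (hface ℓ)]
  exact lintegral_mono' (map_restrict_unitSlab_le_hausdorffMeasure (measurable_obliqueProj ℓ _)
    (removeNth_obliqueProj_single ℓ i)) le_rfl

end Hausdorff

section GagliardoNirenberg

variable {n : ℕ} {P : Set (Euc n)} {u g : Euc n → ℝ≥0∞}

theorem lintegral_update_eq_lintegral_add_smul (g : Euc n → ℝ≥0∞) (y : Fin n → ℝ) (i : Fin n) :
    ∫⁻ t : ℝ, g (WithLp.toLp 2 (Function.update y i t)) =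
      ∫⁻ t : ℝ, g (WithLp.toLp 2 y + t • EuclideanSpace.single i 1) := by
  have hupdate (t : ℝ) : (WithLp.toLp 2 (Function.update y i t) : Euc n) =
      WithLp.toLp 2 y + (t - y i) • EuclideanSpace.single i 1 := by
    ext j
    rcases eq_or_ne j i with rfl | hj <;> simp [*]
  simp_rw [hupdate]
  exact lintegral_sub_right_eq_self
    (fun t => g (WithLp.toLp 2 y + t • EuclideanSpace.single i 1)) (y i)

theorem lintegral_prod_lintegral_add_smul_rpow_le {p : ℝ} (hp : Real.HolderConjugate n p)
    (hg : Measurable g) :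
    ∫⁻ x, ∏ i, (∫⁻ t : ℝ, g (x + t • EuclideanSpace.single i 1)) ^ (1 / (n - 1 : ℝ)) ≤
      (∫⁻ x, g x) ^ p := by
  have hvol := PiLp.volume_preserving_toLp (Fin n)
  have hemb := (MeasurableEquiv.toLp 2 (Fin n → ℝ)).measurableEmbedding
  rw [← hvol.lintegral_comp_emb hemb, ← hvol.lintegral_comp_emb hemb]
  simp_rw [← lintegral_update_eq_lintegral_add_smul]
  simpa [← volume_pi] using lintegral_prod_lintegral_pow_le (fun _ => (volume : Measure ℝ))
    (by simpa using hp) (hg.comp hvol.measurable)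

theorem setLIntegral_rpow_le_of_le_lintegral_add_smul {p : ℝ} (hp : Real.HolderConjugate n p)
    (hP : MeasurableSet P) (hg : Measurable g)
    (hug : ∀ x ∈ P, ∀ i, u x ≤ ∫⁻ t : ℝ, g (x + t • EuclideanSpace.single i 1)) :
    ∫⁻ x in P, u x ^ p ≤ (∫⁻ x, g x) ^ p := by
  have hn : (0 : ℝ) < n - 1 := sub_pos.2 hp.lt
  have hpn : p = 1 / (n - 1 : ℝ) * n := by rw [hp.conjugate_eq]; ring
  refine (setLIntegral_mono' hP fun x hx => ?_).trans
    ((setLIntegral_le_lintegral P _).trans (lintegral_prod_lintegral_add_smul_rpow_le hp hg))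
  calc u x ^ p = ∏ _i : Fin n, u x ^ (1 / (n - 1 : ℝ)) := by
        rw [Finset.prod_const, Finset.card_fin, ← ENNReal.rpow_mul_natCast, ← hpn]
    _ ≤ _ := Finset.prod_le_prod' fun i _ =>
        ENNReal.rpow_le_rpow (hug x hx i) (one_div_pos.2 hn).le

theorem lintegral_add_smul_single_zero (g : Euc 1 → ℝ≥0∞) (x : Euc 1) :
    ∫⁻ t : ℝ, g (x + t • EuclideanSpace.single 0 1) = ∫⁻ y, g y := by
  have hmp := (PiLp.volume_preserving_toLp (Fin 1)).comp
    (volume_preserving_funUnique (Fin 1) ℝ).symm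
  have hemb := (MeasurableEquiv.toLp 2 (Fin 1 → ℝ)).measurableEmbedding.comp
    (MeasurableEquiv.funUnique (Fin 1) ℝ).symm.measurableEmbedding
  have hupdate (t : ℝ) : Function.update (WithLp.ofLp x) 0 t = fun _ => t :=
    funext fun j => by rw [Subsingleton.elim j 0, Function.update_self]
  rw [← WithLp.toLp_ofLp 2 x, ← lintegral_update_eq_lintegral_add_smul,
    ← hmp.lintegral_comp_emb hemb]
  simp_rw [hupdate]
  rfl

end GagliardoNirenberg

section SlabMajorant

variable {n : ℕ} {J : Finset (Euc n →ᵃ[ℝ] ℝ)} {u : Euc n → ℝ≥0∞}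

/-- The chord majorants in the coordinate directions, cut off to the unit slabs and added up: an
integrable density on `ℝⁿ` whose integral along every coordinate line through `polyhedron J`
dominates the values of `u` on that line. -/
def slabMajorant (J : Finset (Euc n →ᵃ[ℝ] ℝ)) (u : Euc n → ℝ≥0∞) (x : Euc n) : ℝ≥0∞ :=
  ∑ i, (unitSlab i).indicator (chordMajorant J u (EuclideanSpace.single i 1)) x

theorem measurable_slabMajorant (hJ : IsClosed (polyhedron J))
    (hu : LowerSemicontinuousOn u (polyhedron J)) : Measurable (slabMajorant J u) :=
  Finset.measurable_sum _ fun i _ =>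
    (measurable_chordMajorant hJ hu).indicator (measurableSet_unitSlab i)

theorem LogConvexOn.le_lintegral_slabMajorant (hJ : IsCompact (polyhedron J))
    (hu : LogConvexOn (polyhedron J) u) {x : Euc n} (hx : x ∈ polyhedron J) (i : Fin n) :
    u x ≤ ∫⁻ t : ℝ, slabMajorant J u (x + t • EuclideanSpace.single i 1) :=
  calc u x ≤ chordMajorant J u (EuclideanSpace.single i 1) x :=
        hu.le_chordMajorant hJ (by simp) hx
    _ = ∫⁻ t : ℝ, (unitSlab i).indicator (chordMajorant J u (EuclideanSpace.single i 1))
          (x + t • EuclideanSpace.single i 1) :=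
        (lintegral_indicator_unitSlab_add_smul (fun y t => chordMajorant_add_smul y t) x).symm
    _ ≤ _ := lintegral_mono fun t => Finset.single_le_sum
        (f := fun j => (unitSlab j).indicator (chordMajorant J u (EuclideanSpace.single j 1))
          (x + t • EuclideanSpace.single i 1)) (fun _ _ => zero_le) (Finset.mem_univ i)

theorem lintegral_slabMajorant_le (hJ : IsClosed (polyhedron J))
    (hu : LowerSemicontinuousOn u (polyhedron J)) :
    ∫⁻ x, slabMajorant J u x ≤
      n * ∑ ℓ ∈ J, ∫⁻ x in {y ∈ polyhedron J | ℓ y = 0}, u x ∂μH[(n : ℝ) - 1] := by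
  have hmeas (i : Fin n) := (measurable_chordMajorant (v := EuclideanSpace.single i 1) hJ
    hu).indicator (measurableSet_unitSlab i)
  have hslab (i : Fin n) : ∫⁻ x in unitSlab i, chordMajorant J u (EuclideanSpace.single i 1) x ≤
      ∑ ℓ ∈ J, ∫⁻ x in {y ∈ polyhedron J | ℓ y = 0}, u x ∂μH[(n : ℝ) - 1] := by
    rcases n with _ | m
    · exact i.elim0
    · simpa using setLIntegral_chordMajorant_le hJ hu i
  simp only [slabMajorant]
  rw [lintegral_finsetSum _ fun i _ => hmeas i]
  simp_rw [lintegral_indicator (measurableSet_unitSlab _)]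
  exact (Finset.sum_le_card_nsmul _ _ _ fun i _ => hslab i).trans_eq (by simp)

theorem LogConvexOn.setLIntegral_rpow_le {p : ℝ} (hp : Real.HolderConjugate n p)
    (hJ : IsCompact (polyhedron J)) (hlsc : LowerSemicontinuousOn u (polyhedron J))
    (hu : LogConvexOn (polyhedron J) u) :
    ∫⁻ x in polyhedron J, u x ^ p ≤
      (n * ∑ ℓ ∈ J, ∫⁻ x in {y ∈ polyhedron J | ℓ y = 0}, u x ∂μH[(n : ℝ) - 1]) ^ p :=
  (setLIntegral_rpow_le_of_le_lintegral_add_smul hp hJ.measurableSet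
    (measurable_slabMajorant hJ.isClosed hlsc)
    fun _ hx i => hu.le_lintegral_slabMajorant hJ hx i).trans
  (ENNReal.rpow_le_rpow (lintegral_slabMajorant_le hJ.isClosed hlsc) hp.symm.nonneg)

theorem LogConvexOn.le_sum_lintegral_of_dim_one {J : Finset (Euc 1 →ᵃ[ℝ] ℝ)}
    {u : Euc 1 → ℝ≥0∞} (hJ : IsCompact (polyhedron J))
    (hlsc : LowerSemicontinuousOn u (polyhedron J)) (hu : LogConvexOn (polyhedron J) u)
    {x : Euc 1} (hx : x ∈ polyhedron J) :
    u x ≤ ∑ ℓ ∈ J, ∫⁻ x in {y ∈ polyhedron J | ℓ y = 0}, u x ∂μH[0] := by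
  have := (hu.le_lintegral_slabMajorant hJ hx 0).trans_eq (lintegral_add_smul_single_zero _ x)
  simpa using this.trans (lintegral_slabMajorant_le hJ.isClosed hlsc)

theorem exists_setLIntegral_rpow_le_of_logConvexOn (hn : n ≠ 0) (hJ : IsCompact (polyhedron J)) :
    ∃ r : ℝ, 0 < r ∧ ∃ A : ℝ≥0∞, A ≠ ⊤ ∧ ∀ u, LowerSemicontinuousOn u (polyhedron J) →
      LogConvexOn (polyhedron J) u → ∫⁻ x in polyhedron J, u x ^ (1 + r) ≤
        A * (∑ ℓ ∈ J, ∫⁻ x in {y ∈ polyhedron J | ℓ y = 0}, u x ∂μH[(n : ℝ) - 1]) ^ (1 + r) := by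
  obtain rfl | hn1 : n = 1 ∨ 1 < n := by omega
  · refine ⟨1, one_pos, volume (polyhedron J), hJ.measure_ne_top, fun u hlsc hu => ?_⟩
    rw [mul_comm, ← setLIntegral_const]
    refine setLIntegral_mono' hJ.measurableSet fun x hx =>
      ENNReal.rpow_le_rpow ?_ (by norm_num)
    simpa using hu.le_sum_lintegral_of_dim_one hJ hlsc hx
  · have hp := Real.HolderConjugate.conjExponent (by exact_mod_cast hn1 : (1 : ℝ) < n)
    refine ⟨Real.conjExponent n - 1, sub_pos.2 hp.symm.lt, (n : ℝ≥0∞) ^ Real.conjExponent n,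
      ENNReal.rpow_ne_top_of_nonneg hp.symm.nonneg (ENNReal.natCast_ne_top n),
      fun u hlsc hu => ?_⟩
    rw [add_sub_cancel, ← ENNReal.mul_rpow_of_nonneg _ _ hp.symm.nonneg]
    exact hu.setLIntegral_rpow_le hp hJ hlsc

end SlabMajorant

section EntropyBound

open InformationTheory

theorem klFun_le_rpow_add_one {r x : ℝ} (hr : 0 < r) (hx : 0 ≤ x) :
    klFun x ≤ r⁻¹ * x ^ (1 + r) + 1 := by
  have hlog : x * Real.log x ≤ r⁻¹ * x ^ (1 + r) :=
    calc x * Real.log x ≤ x * (x ^ r / r) :=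
          mul_le_mul_of_nonneg_left (Real.log_le_rpow_div hx hr) hx
      _ = r⁻¹ * x ^ (1 + r) := by
          rw [Real.rpow_add_of_nonneg hx zero_le_one hr.le, Real.rpow_one]
          ring
  rw [klFun_apply]
  linarith

theorem relEntropy_le_lintegral_rpow {α : Type*} [MeasurableSpace α] {ν : Measure α}
    {u : α → ℝ≥0∞} {r : ℝ} (hr : 0 < r) :
    relEntropy ν u ≤ ENNReal.ofReal r⁻¹ * ∫⁻ x, u x ^ (1 + r) ∂ν + ν Set.univ := by
  have hpt (x : α) : ENNReal.ofReal (klFun (u x).toReal) ≤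
      ENNReal.ofReal r⁻¹ * u x ^ (1 + r) + 1 :=
    calc _ ≤ ENNReal.ofReal (r⁻¹ * (u x).toReal ^ (1 + r) + 1) :=
          ENNReal.ofReal_le_ofReal (klFun_le_rpow_add_one hr ENNReal.toReal_nonneg)
      _ = ENNReal.ofReal r⁻¹ * ENNReal.ofReal (u x ^ (1 + r)).toReal + 1 := by
          rw [ENNReal.ofReal_add (by positivity) zero_le_one, ENNReal.ofReal_mul (by positivity),
            ENNReal.toReal_rpow, ENNReal.ofReal_one]
      _ ≤ _ := by gcongr; exact ENNReal.ofReal_toReal_le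
  refine (lintegral_mono hpt).trans_eq ?_
  rw [lintegral_add_right _ measurable_const, lintegral_const_mul' _ _ ENNReal.ofReal_ne_top]
  simp

end EntropyBound

section Entropy

open InformationTheory

variable {α : Type*} [MeasurableSpace α] {ν : Measure α} {u : α → ℝ≥0∞}

theorem relEntropy_smul_measure (c : ℝ≥0∞) : relEntropy (c • ν) u = c * relEntropy ν u := by
  rw [relEntropy, lintegral_smul_measure, smul_eq_mul, relEntropy]

theorem lintegral_ofReal_neg_xlogx_le : ∫⁻ x, ENNReal.ofReal (-xlogx (u x)) ∂ν ≤ ν Set.univ := by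
  rw [← lintegral_one]
  refine lintegral_mono fun x => ENNReal.ofReal_le_one.2 ?_
  have hkl := klFun_nonneg (x := (u x).toReal) ENNReal.toReal_nonneg
  have hx : 0 ≤ (u x).toReal := ENNReal.toReal_nonneg
  rw [klFun_apply] at hkl
  rw [xlogx]
  linarith

theorem klFun_add_neg_xlogx_add {y : ℝ≥0∞} (hy : y ≠ ⊤) :
    ENNReal.ofReal (klFun y.toReal) + (ENNReal.ofReal (-xlogx y) + y) =
      ENNReal.ofReal (xlogx y) + 1 := by
  have hkl := klFun_nonneg (x := y.toReal) ENNReal.toReal_nonneg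
  have hxlogx : klFun y.toReal = xlogx y + 1 - y.toReal := rfl
  rw [← ENNReal.toReal_eq_toReal_iff' (by finiteness) (by finiteness),
    ENNReal.toReal_add (by finiteness) (by finiteness), ENNReal.toReal_add (by finiteness) hy,
    ENNReal.toReal_add (by finiteness) (by finiteness)]
  simp only [ENNReal.toReal_ofReal', ENNReal.toReal_one, max_eq_left hkl]
  rcases le_total 0 (xlogx y) with h | h
  · rw [max_eq_right (neg_nonpos.2 h), max_eq_left h]
    linarith
  · rw [max_eq_left (neg_nonneg.2 h), max_eq_right h]
    linarith

theorem relEntropy_add_lintegral_ofReal_neg_xlogx [IsFiniteMeasure ν] (hu : AEMeasurable u ν)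
    (hu_int : ∫⁻ x, u x ∂ν = ν Set.univ) :
    relEntropy ν u + ∫⁻ x, ENNReal.ofReal (-xlogx (u x)) ∂ν =
      ∫⁻ x, ENNReal.ofReal (xlogx (u x)) ∂ν := by
  have hxlogx : AEMeasurable (fun x => ENNReal.ofReal (-xlogx (u x))) ν :=
    (hu.ennreal_toReal.mul
      (Real.measurable_log.comp_aemeasurable hu.ennreal_toReal)).neg.ennreal_ofReal
  have hu_top := ae_lt_top' hu (hu_int.trans_ne (measure_ne_top ν _))
  rw [← ENNReal.add_left_inj (measure_ne_top ν Set.univ)]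
  calc _ = ∫⁻ x, (ENNReal.ofReal (klFun (u x).toReal) +
          (ENNReal.ofReal (-xlogx (u x)) + u x)) ∂ν := by
        rw [lintegral_add_left' (aemeasurable_ofReal_klFun hu),
          lintegral_add_left' hxlogx, hu_int, ← add_assoc, relEntropy]
    _ = ∫⁻ x, (ENNReal.ofReal (xlogx (u x)) + 1) ∂ν :=
        lintegral_congr_ae (hu_top.mono fun x hx => klFun_add_neg_xlogx_add hx.ne)
    _ = _ := by rw [lintegral_add_right _ measurable_const, lintegral_one]

theorem toReal_inv_mul_sub_add {a h b : ℝ≥0∞} (ha : a ≠ 0) (hb : b ≠ ⊤) :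
    ((a.toReal⁻¹ : ℝ) : EReal) * ((b : EReal) - ((h + b : ℝ≥0∞) : EReal)) =
      -((a⁻¹ * h : ℝ≥0∞) : EReal) := by
  have hsub : (b : EReal) - ((h + b : ℝ≥0∞) : EReal) = -(h : EReal) := by
    lift b to ℝ≥0 using hb
    rw [← EReal.add_sub_cancel_right (a := (h : EReal)) (b := b), EReal.neg_sub (by simp) (by simp),
      EReal.coe_ennreal_add, EReal.coe_nnreal_eq_coe_real, sub_eq_add_neg, add_comm]
  rw [hsub, mul_neg, EReal.coe_ennreal_mul, ← ENNReal.toReal_inv,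
    EReal.coe_ennreal_toReal (ENNReal.inv_ne_top.2 ha)]

end Entropy

namespace NSystem

variable {n : ℕ} {S : NSystem n} {T : ℝ} {u v : Euc n → ℝ≥0∞}

/-- The probability measure `μ / μ(P)` on `P`. -/
def interiorMeasure (S : NSystem n) : Measure (Euc n) := (S.μ S.P)⁻¹ • S.μ.restrict S.P

/-- The boundary measure `σ / μ(P)`, for which the internal energy is `∫ u d(σ / μ(P))`. -/
def boundaryMeasure (S : NSystem n) : Measure (Euc n) :=
  (S.μ S.P)⁻¹ • S.σ.restrict (frontier S.P)

theorem isPolytope (S : NSystem n) : IsPolytope S.P := S.simple.1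

theorem isCompact (S : NSystem n) : IsCompact S.P := S.isPolytope.1

theorem measurableSet (S : NSystem n) : MeasurableSet S.P := S.isCompact.measurableSet

theorem exists_restrict_eq (S : NSystem n) :
    ∃ c : ℝ≥0∞, c ≠ 0 ∧ c ≠ ⊤ ∧ S.μ.restrict S.P = c • volume.restrict S.P := by
  obtain ⟨c, hc, hμ⟩ := S.flat
  refine ⟨ENNReal.ofReal c, by simpa using hc, ENNReal.ofReal_ne_top, ?_⟩
  rw [hμ, Measure.restrict_smul, Measure.restrict_restrict S.measurableSet, Set.inter_self]

theorem measure_ne_zero (S : NSystem n) : S.μ S.P ≠ 0 := by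
  obtain ⟨c, hc, -, hμ⟩ := S.exists_restrict_eq
  rw [← Measure.restrict_apply_self, hμ, Measure.smul_apply, Measure.restrict_apply_self]
  exact mul_ne_zero hc (isOpen_interior.measure_pos volume S.isPolytope.2.1 |>.trans_le
    (measure_mono interior_subset)).ne'

theorem measure_ne_top (S : NSystem n) : S.μ S.P ≠ ⊤ := by
  obtain ⟨c, -, hc, hμ⟩ := S.exists_restrict_eq
  rw [← Measure.restrict_apply_self, hμ, Measure.smul_apply, Measure.restrict_apply_self]
  exact ENNReal.mul_ne_top hc S.isCompact.measure_ne_top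

theorem ae_interiorMeasure (S : NSystem n) : ae S.interiorMeasure = ae (volume.restrict S.P) := by
  obtain ⟨c, hc, -, hμ⟩ := S.exists_restrict_eq
  rw [interiorMeasure, Measure.ae_ennreal_smul_measure_eq (ENNReal.inv_ne_zero.2 S.measure_ne_top),
    hμ, Measure.ae_ennreal_smul_measure_eq hc]

instance : IsProbabilityMeasure S.interiorMeasure :=
  ⟨by simp [interiorMeasure, ENNReal.inv_mul_cancel S.measure_ne_zero S.measure_ne_top]⟩

theorem ae_boundaryMeasure_mem (S : NSystem n) : ∀ᵐ x ∂S.boundaryMeasure, x ∈ S.P :=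
  Measure.ae_smul_measure ((ae_restrict_mem isClosed_frontier.measurableSet).mono fun _ hx =>
    S.isCompact.isClosed.frontier_subset hx) _

theorem measure_facet_lt_top (S : NSystem n) {F : Set (Euc n)} (hF : IsFacetOf S.P F) :
    S.σ F < ⊤ := by
  obtain ⟨c, -, hσ⟩ := S.flat_bdry F hF
  have hdim : (n : ℝ) - 1 = Module.finrank ℝ (vectorSpan ℝ F) := by
    rw [sub_eq_iff_eq_add]
    exact_mod_cast hF.2.symm
  rw [← Measure.restrict_apply_self, hσ, Measure.smul_apply, Measure.restrict_apply_self, hdim]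
  exact ENNReal.mul_lt_top ENNReal.ofReal_lt_top (hausdorffMeasure_lt_top_of_isBounded
    (S.isCompact.isBounded.subset (hF.1.subset_frontier.trans
      S.isCompact.isClosed.frontier_subset)))

theorem measure_frontier_lt_top (S : NSystem n) : S.σ (frontier S.P) < ⊤ := by
  obtain ⟨J, hJ, hfacet⟩ := S.isPolytope.exists_facet_presentation
  have hcover : frontier S.P ⊆ ⋃ ℓ ∈ J, {x ∈ S.P | ℓ x = 0} := fun x hx => by
    have hxP := S.isCompact.isClosed.frontier_subset hx
    rw [← hJ] at hx
    obtain ⟨ℓ, hℓ, hℓx⟩ := exists_eq_zero_of_mem_frontier_polyhedron hx (hJ ▸ hxP)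
    exact Set.mem_biUnion hℓ ⟨hxP, hℓx⟩
  calc S.σ (frontier S.P) ≤ _ := measure_mono hcover
    _ ≤ ∑ ℓ ∈ J, S.σ {x ∈ S.P | ℓ x = 0} := measure_biUnion_finset_le _ _
    _ < ⊤ := ENNReal.sum_lt_top.2 fun ℓ hℓ => S.measure_facet_lt_top (hfacet ℓ hℓ)

instance : IsFiniteMeasure S.boundaryMeasure :=
  ⟨by
    simpa [boundaryMeasure] using ENNReal.mul_lt_top
      (ENNReal.inv_lt_top.2 S.measure_ne_zero.bot_lt) S.measure_frontier_lt_top⟩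

theorem exists_facet_lintegral_le (S : NSystem n) {F : Set (Euc n)} (hF : IsFacetOf S.P F) :
    ∃ A : ℝ≥0∞, A ≠ ⊤ ∧ ∀ u : Euc n → ℝ≥0∞,
      ∫⁻ x in F, u x ∂μH[(n : ℝ) - 1] ≤ A * ∫⁻ x, u x ∂S.boundaryMeasure := by
  obtain ⟨c, hc, hσ⟩ := S.flat_bdry F hF
  have hc₀ : ENNReal.ofReal c ≠ 0 := by simpa using hc
  refine ⟨(ENNReal.ofReal c)⁻¹ * S.μ S.P,
    ENNReal.mul_ne_top (ENNReal.inv_ne_top.2 hc₀) S.measure_ne_top, fun u => ?_⟩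
  rw [boundaryMeasure, lintegral_smul_measure, smul_eq_mul, mul_assoc,
    ENNReal.mul_inv_cancel_left S.measure_ne_zero S.measure_ne_top]
  calc ∫⁻ x in F, u x ∂μH[(n : ℝ) - 1]
      = (ENNReal.ofReal c)⁻¹ * ∫⁻ x in F, u x ∂S.σ := by
        rw [hσ, lintegral_smul_measure, smul_eq_mul,
          ENNReal.inv_mul_cancel_left hc₀ ENNReal.ofReal_ne_top]
    _ ≤ (ENNReal.ofReal c)⁻¹ * ∫⁻ x in frontier S.P, u x ∂S.σ :=
        mul_le_mul_right (lintegral_mono_set hF.1.subset_frontier) _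

theorem exists_sum_facet_lintegral_le (S : NSystem n) {J : Finset (Euc n →ᵃ[ℝ] ℝ)}
    (hJ : ∀ ℓ ∈ J, IsFacetOf S.P {x ∈ S.P | ℓ x = 0}) :
    ∃ A : ℝ≥0∞, A ≠ ⊤ ∧ ∀ u : Euc n → ℝ≥0∞,
      ∑ ℓ ∈ J, ∫⁻ x in {y ∈ S.P | ℓ y = 0}, u x ∂μH[(n : ℝ) - 1] ≤
        A * ∫⁻ x, u x ∂S.boundaryMeasure := by
  choose! A hA hle using fun ℓ hℓ => S.exists_facet_lintegral_le (hJ ℓ hℓ)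
  refine ⟨∑ ℓ ∈ J, A ℓ, ENNReal.sum_ne_top.2 hA, fun u => ?_⟩
  rw [Finset.sum_mul]
  exact Finset.sum_le_sum fun ℓ hℓ => hle ℓ hℓ u

theorem aemeasurable_of_lowerSemicontinuousOn (hu : LowerSemicontinuousOn u S.P) :
    AEMeasurable u (S.μ.restrict S.P) :=
  _root_.aemeasurable_of_lowerSemicontinuousOn S.measurableSet (ae_restrict_mem S.measurableSet) hu

theorem mExp_one_eq (S : NSystem n) : MExp S 1 = logConvexDensities S.P S.interiorMeasure := by
  ext u
  have hmass : ∫⁻ x in S.P, u x ∂S.μ = S.μ S.P ↔ ∫⁻ x, u x ∂S.interiorMeasure = 1 := by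
    rw [interiorMeasure, lintegral_smul_measure, smul_eq_mul, mul_comm, ← div_eq_mul_inv,
      ENNReal.div_eq_one_iff S.measure_ne_zero S.measure_ne_top]
  simp only [MExp, logConvexDensities, Set.mem_ofPred_eq, ENNReal.rpow_one, ← hmass]
  refine ⟨fun ⟨hlsc, hpos, hlog, hint, _⟩ => ⟨hlsc, hpos, hlog, hint⟩,
    fun ⟨hlsc, hpos, hlog, hint⟩ => ⟨hlsc, hpos, hlog, hint, ?_⟩⟩
  exact hint ▸ S.measure_ne_top.lt_top

theorem upf_eq (S : NSystem n) (u : Euc n → ℝ≥0∞) : Upf S u = ∫⁻ x, u x ∂S.boundaryMeasure := by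
  rw [Upf, boundaryMeasure, lintegral_smul_measure, smul_eq_mul]

theorem spf_eq (hu : u ∈ MExp S 1) : Spf S u = -(relEntropy S.interiorMeasure u : EReal) := by
  have : IsFiniteMeasure (S.μ.restrict S.P) := ⟨by simpa using S.measure_ne_top.lt_top⟩
  have hneg : ∫⁻ x in S.P, ENNReal.ofReal (-xlogx (u x)) ∂S.μ ≠ ⊤ :=
    ne_top_of_le_ne_top (by simpa using S.measure_ne_top) lintegral_ofReal_neg_xlogx_le
  rw [Spf, ← relEntropy_add_lintegral_ofReal_neg_xlogx
      (aemeasurable_of_lowerSemicontinuousOn hu.1) (by simpa using hu.2.2.2.1),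
    toReal_inv_mul_sub_add S.measure_ne_zero hneg, interiorMeasure, relEntropy_smul_measure]

theorem fpf_eq (hT : 0 < T) (hu : u ∈ MExp S 1) :
    Fpf S T u = freeEnergy S.interiorMeasure S.boundaryMeasure (ENNReal.ofReal T) u := by
  rw [Fpf, spf_eq hu, freeEnergy, ← upf_eq]
  split_ifs with hH
  · rw [EReal.neg_eq_bot_iff, EReal.coe_ennreal_eq_top_iff] at hH
    rw [hH, ENNReal.mul_top (by simpa using hT), add_top, EReal.coe_ennreal_top]
  · rw [EReal.coe_ennreal_add, EReal.coe_ennreal_mul, EReal.coe_ennreal_ofReal,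
      max_eq_left hT.le, mul_neg, sub_eq_add_neg, neg_neg]

theorem exists_setLIntegral_rpow_le_upf (S : NSystem n) (hn : n ≠ 0) :
    ∃ r : ℝ, 0 < r ∧ ∃ A : ℝ≥0∞, A ≠ ⊤ ∧ ∀ u ∈ MExp S 1,
      ∫⁻ x in S.P, u x ^ (1 + r) ≤ A * Upf S u ^ (1 + r) := by
  obtain ⟨J, hJ, hfacet⟩ := S.isPolytope.exists_facet_presentation
  obtain ⟨A, hA, hle⟩ := S.exists_sum_facet_lintegral_le hfacet
  obtain ⟨r, hr, B, hB, hrpow⟩ :=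
    exists_setLIntegral_rpow_le_of_logConvexOn hn (hJ.symm ▸ S.isCompact)
  rw [hJ] at hrpow
  refine ⟨r, hr, B * A ^ (1 + r), by finiteness, fun u hu => (hrpow u hu.1 hu.2.2.1).trans ?_⟩
  rw [mul_assoc, ← ENNReal.mul_rpow_of_nonneg _ _ (by positivity), S.upf_eq]
  gcongr
  exact hle u

theorem mem_mExp_conjExponent (hu : u ∈ MExp S 1) (hU : Upf S u ≠ ⊤) :
    u ∈ MExp S ((n : ℝ) / ((n : ℝ) - 1)) := by
  refine ⟨hu.1, hu.2.1, hu.2.2.1, hu.2.2.2.1, ?_⟩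
  rcases le_or_gt n 1 with hn | hn
  · -- For `n = 1` the exponent is `1 / 0 = 0`.
    have hp : (n : ℝ) / ((n : ℝ) - 1) = 0 := by interval_cases n <;> simp
    simpa [hp] using S.measure_ne_top.lt_top
  · obtain ⟨J, hJ, hfacet⟩ := S.isPolytope.exists_facet_presentation
    obtain ⟨A, hA, hle⟩ := S.exists_sum_facet_lintegral_le hfacet
    obtain ⟨c, -, hc, hμ⟩ := S.exists_restrict_eq
    have hp := Real.HolderConjugate.conjExponent (by exact_mod_cast hn : (1 : ℝ) < n)
    have hrpow := LogConvexOn.setLIntegral_rpow_le (J := J) hp (hJ.symm ▸ S.isCompact)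
      (hJ.symm ▸ hu.1) (hJ.symm ▸ hu.2.2.1)
    rw [hJ] at hrpow
    rw [hμ, lintegral_smul_measure]
    refine ENNReal.mul_lt_top hc.lt_top (hrpow.trans_lt ?_)
    have hsum := ne_top_of_le_ne_top (ENNReal.mul_ne_top hA (S.upf_eq u ▸ hU)) (hle u)
    exact ENNReal.rpow_lt_top_of_nonneg hp.symm.nonneg (by finiteness)

theorem relEntropy_eq_zero_of_dim_zero {S : NSystem 0} {u : Euc 0 → ℝ≥0∞}
    (hu : ∫⁻ x, u x ∂S.interiorMeasure = 1) : relEntropy S.interiorMeasure u = 0 := by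
  have hconst : u = fun _ => u 0 := funext fun x => by rw [Subsingleton.elim x 0]
  rw [hconst, lintegral_const, measure_univ, mul_one] at hu
  rw [hconst, hu, relEntropy_one]

theorem exists_relEntropy_le (S : NSystem n) {C : ℝ≥0∞} (hC : C ≠ ⊤) :
    ∃ B ≠ ⊤, ∀ u ∈ logConvexDensities S.P S.interiorMeasure,
      ∫⁻ x, u x ∂S.boundaryMeasure ≤ C → relEntropy S.interiorMeasure u ≤ B := by
  rcases eq_or_ne n 0 with rfl | hn
  · exact ⟨0, ENNReal.zero_ne_top, fun u hu _ => (relEntropy_eq_zero_of_dim_zero hu.2.2.2).le⟩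
  obtain ⟨r, hr, A, hA, hrpow⟩ := S.exists_setLIntegral_rpow_le_upf hn
  obtain ⟨c, -, hc, hμ⟩ := S.exists_restrict_eq
  refine ⟨ENNReal.ofReal r⁻¹ * ((S.μ S.P)⁻¹ * (c * (A * C ^ (1 + r)))) + 1, ?_, fun u hu huC => ?_⟩
  · have := ENNReal.inv_ne_top.2 S.measure_ne_zero
    finiteness
  rw [← S.mExp_one_eq] at hu
  rw [← S.upf_eq] at huC
  refine (relEntropy_le_lintegral_rpow hr).trans ?_
  rw [measure_univ, interiorMeasure, hμ, lintegral_smul_measure, lintegral_smul_measure,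
    smul_eq_mul, smul_eq_mul]
  gcongr
  exact (hrpow u hu).trans (by gcongr)

theorem exists_isEntropicMinimizer (S : NSystem n) (t : ℝ≥0∞) :
    ∃ u, IsEntropicMinimizer S.P S.interiorMeasure S.boundaryMeasure t u :=
  _root_.exists_isEntropicMinimizer S.isPolytope.convex S.measurableSet S.ae_interiorMeasure
    S.ae_boundaryMeasure_mem fun _ => S.exists_relEntropy_le

theorem upf_eq_freeEnergy (S : NSystem n) (u : Euc n → ℝ≥0∞) :
    Upf S u = freeEnergy S.interiorMeasure S.boundaryMeasure 0 u := by
  rw [upf_eq, freeEnergy, zero_mul, add_zero]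

theorem fpf_le_fpf_iff (hT : 0 < T) (hu : u ∈ MExp S 1) (hv : v ∈ MExp S 1) :
    Fpf S T u ≤ Fpf S T v ↔
      freeEnergy S.interiorMeasure S.boundaryMeasure (ENNReal.ofReal T) u ≤
        freeEnergy S.interiorMeasure S.boundaryMeasure (ENNReal.ofReal T) v := by
  rw [fpf_eq hT hu, fpf_eq hT hv, EReal.coe_ennreal_le_coe_ennreal_iff]

theorem spf_le_spf_iff (hu : u ∈ MExp S 1) (hv : v ∈ MExp S 1) :
    Spf S u ≤ Spf S v ↔ relEntropy S.interiorMeasure v ≤ relEntropy S.interiorMeasure u := by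
  rw [spf_eq hu, spf_eq hv, EReal.neg_le_neg_iff, EReal.coe_ennreal_le_coe_ennreal_iff]

end NSystem

namespace IsEntropicMinimizer

variable {n : ℕ} {S : NSystem n} {t : ℝ≥0∞} {u v : Euc n → ℝ≥0∞}

theorem freeEnergy_ne_top
    (hu : IsEntropicMinimizer S.P S.interiorMeasure S.boundaryMeasure t u) :
    freeEnergy S.interiorMeasure S.boundaryMeasure t u ≠ ⊤ :=
  ne_top_of_le_ne_top (measure_ne_top S.boundaryMeasure Set.univ)
    ((hu.le _ one_mem_logConvexDensities).trans_eq freeEnergy_one)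

theorem upf_ne_top (hu : IsEntropicMinimizer S.P S.interiorMeasure S.boundaryMeasure t u) :
    Upf S u ≠ ⊤ :=
  ne_top_of_le_ne_top hu.freeEnergy_ne_top ((S.upf_eq u).trans_le le_self_add)

theorem mem_mExp_one (hu : IsEntropicMinimizer S.P S.interiorMeasure S.boundaryMeasure t u) :
    u ∈ MExp S 1 :=
  S.mExp_one_eq ▸ hu.mem

theorem eqOn_of_mem_mExp
    (hu : IsEntropicMinimizer S.P S.interiorMeasure S.boundaryMeasure t u) (hv : v ∈ MExp S 1)
    (hvF : freeEnergy S.interiorMeasure S.boundaryMeasure t v ≤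
      freeEnergy S.interiorMeasure S.boundaryMeasure t u)
    (h : t ≠ 0 ∨ relEntropy S.interiorMeasure v ≤ relEntropy S.interiorMeasure u) :
    Set.EqOn v u S.P := by
  obtain ⟨B, hB, hle⟩ := S.exists_relEntropy_le (S.upf_eq u ▸ hu.upf_ne_top)
  exact hu.eqOn S.isPolytope.convex S.measurableSet S.isPolytope.2.1 S.ae_interiorMeasure
    S.ae_boundaryMeasure_mem hu.freeEnergy_ne_top
    (ne_top_of_le_ne_top hB (hle u hu.mem le_rfl)) (S.mExp_one_eq ▸ hv) hvF h

theorem upf_le (hu : IsEntropicMinimizer S.P S.interiorMeasure S.boundaryMeasure 0 u)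
    (hv : v ∈ MExp S 1) : Upf S u ≤ Upf S v := by
  simpa only [S.upf_eq_freeEnergy] using hu.le v (S.mExp_one_eq ▸ hv)

theorem isGreatest_spf (hu : IsEntropicMinimizer S.P S.interiorMeasure S.boundaryMeasure 0 u) :
    IsGreatest {s | ∃ v ∈ MExp S 1, (∀ w ∈ MExp S 1, Upf S v ≤ Upf S w) ∧ Spf S v = s}
      (Spf S u) := by
  refine ⟨⟨u, hu.mem_mExp_one, fun v => hu.upf_le, rfl⟩, ?_⟩
  rintro _ ⟨v, hv, hv_min, rfl⟩
  exact (NSystem.spf_le_spf_iff hv hu.mem_mExp_one).2 (hu.relEntropy_le v (S.mExp_one_eq ▸ hv)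
    (by simpa only [S.upf_eq_freeEnergy] using hv_min u hu.mem_mExp_one))

end IsEntropicMinimizer

/-- Uniqueness of minimizers: for `T > 0` the minimizer of `F_𝒫(T,·)` on
`ℳ^{exp,1}(P)` exists, lies in `ℳ^{exp,n/(n−1)}(P)` and is unique (on `P`); for
`T = 0` there is a unique `u ∈ ℳ^{exp,n/(n−1)}(P)` minimizing `U_𝒫` whose entropy
equals the supremum of `S_𝒫` over all minimizers of `U_𝒫`. -/
theorem uniqueness_of_minimizers (n : ℕ) (S : NSystem n) :
    (∀ T : ℝ, 0 < T →
      ∃ u, u ∈ MExp S ((n : ℝ) / ((n : ℝ) - 1)) ∧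
        (∀ u' ∈ MExp S 1, Fpf S T u ≤ Fpf S T u') ∧
        ∀ v ∈ MExp S 1, (∀ u' ∈ MExp S 1, Fpf S T v ≤ Fpf S T u') →
          Set.EqOn v u S.P) ∧
    (∃ u, u ∈ MExp S ((n : ℝ) / ((n : ℝ) - 1)) ∧
      (∀ u' ∈ MExp S 1, Upf S u ≤ Upf S u') ∧
      Spf S u = sSup {s : EReal | ∃ u' ∈ MExp S 1,
          (∀ u'' ∈ MExp S 1, Upf S u' ≤ Upf S u'') ∧ Spf S u' = s} ∧
      ∀ v ∈ MExp S 1,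
        ((∀ u' ∈ MExp S 1, Upf S v ≤ Upf S u') ∧
          Spf S v = sSup {s : EReal | ∃ u' ∈ MExp S 1,
              (∀ u'' ∈ MExp S 1, Upf S u' ≤ Upf S u'') ∧ Spf S u' = s}) →
        Set.EqOn v u S.P) := by
  refine ⟨fun T hT => ?_, ?_⟩
  · obtain ⟨u, hu⟩ := S.exists_isEntropicMinimizer (ENNReal.ofReal T)
    have huM := hu.mem_mExp_one
    refine ⟨u, NSystem.mem_mExp_conjExponent huM hu.upf_ne_top, fun v hv => ?_,
      fun v hv hv_min => ?_⟩
    · exact (NSystem.fpf_le_fpf_iff hT huM hv).2 (hu.le v (S.mExp_one_eq ▸ hv))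
    · exact hu.eqOn_of_mem_mExp hv ((NSystem.fpf_le_fpf_iff hT hv huM).1 (hv_min u huM))
        (Or.inl (by simpa using hT))
  · obtain ⟨u, hu⟩ := S.exists_isEntropicMinimizer 0
    have huM := hu.mem_mExp_one
    have hu_sSup := hu.isGreatest_spf.isLUB.sSup_eq.symm
    refine ⟨u, NSystem.mem_mExp_conjExponent huM hu.upf_ne_top, fun v => hu.upf_le, hu_sSup,
      fun v hv ⟨hv_min, hv_sSup⟩ => ?_⟩
    refine hu.eqOn_of_mem_mExp hv (by simpa only [S.upf_eq_freeEnergy] using hv_min u huM)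
      (Or.inr ((NSystem.spf_le_spf_iff huM hv).1 ?_))
    exact (hu_sSup.trans hv_sSup.symm).le

end
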